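/- Homogeneous Strichartz estimate on homogeneous trees: let Q ≥ 2 be an integer, let T be a homogeneous tree of degree Q+1, let 0 < α ≤ 2, and let (p, q) be an admissible pair, i.e. (1/p, 1/q) ∈ [0, 1/2] × [0, 1/2) ∪ {(0, 1/2)}. Then there exists a constant C > 0 such that for every f ∈ ℓ²(T): ‖ t ↦ ‖e^{it(−Δ)^{α/2}} f‖_{ℓ^{q}(T)} ‖_{L^{p}(ℝ)} ≤ C·‖f‖_{ℓ²(T)}. -/

import Mathlib

open MeasureTheory
open scoped ENNReal

/-- In a tree, every vertex `x ≠ y` has a unique neighbour closer to `y`; all the other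
neighbours are farther away. -/
theorem SimpleGraph.IsTree.exists_adj_dist_add_one_eq {V : Type*} {G : SimpleGraph V}
    (hG : G.IsTree) {x y : V} (hxy : x ≠ y) :
    ∃ z, G.Adj x z ∧ G.dist z y + 1 = G.dist x y ∧
      ∀ z', G.Adj x z' → z' ≠ z → G.dist z' y = G.dist x y + 1 := by
  obtain ⟨p, hp, hpl⟩ := hG.connected.exists_path_of_dist x y
  cases p with
  | nil => exact absurd rfl hxy
  | @cons _ z _ h p =>
    have hzle : G.dist z y ≤ p.length := SimpleGraph.dist_le p
    have key : ∀ z', G.Adj x z' → G.dist z' y + 1 = G.dist x y → z' = z := by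
      intro z' hz' hd
      obtain ⟨p', hp', hpl'⟩ := hG.connected.exists_path_of_dist z' y
      have hq : (SimpleGraph.Walk.cons hz' p').IsPath := by
        apply SimpleGraph.Walk.isPath_of_length_eq_dist
        simp [hpl', hd]
      have := (hG.existsUnique_path x y).unique hp hq
      simp only [SimpleGraph.Walk.cons.injEq] at this
      exact this.1.symm
    have hz : G.dist z y + 1 = G.dist x y := by
      have h2 := h.diff_dist_adj (u := y)
      rw [SimpleGraph.dist_comm (u := y), SimpleGraph.dist_comm (u := y)] at h2
      simp at hpl
      omega
    refine ⟨z, h, hz, fun z' hz' hne => ?_⟩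
    have h2 := hG.dist_eq_dist_add_one_of_adj y hz'
    rw [SimpleGraph.dist_comm (u := y), SimpleGraph.dist_comm (u := y)] at h2
    rcases h2 with h2 | h2
    · exact absurd (key z' hz' h2.symm) hne
    · exact h2

/-- Summation of a function of the distance to `y` over the neighbours of a vertex of a
homogeneous tree. -/
theorem SimpleGraph.IsTree.sum_neighborFinset_dist {V : Type*} [DecidableEq V] {G : SimpleGraph V}
    [∀ v, Fintype (G.neighborSet v)] (hG : G.IsTree) {Q : ℕ} (hdeg : ∀ v : V, G.degree v = Q + 1)
    {R : Type*} [CommRing R] (F : ℕ → R) (x y : V) :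
    ∑ z ∈ G.neighborFinset x, F (G.dist z y) =
      if x = y then ((Q : R) + 1) * F 1
      else F (G.dist x y - 1) + (Q : R) * F (G.dist x y + 1) := by
  split_ifs with hxy
  · subst hxy
    rw [Finset.sum_congr rfl (g := fun _ => F 1)]
    · rw [Finset.sum_const, SimpleGraph.card_neighborFinset_eq_degree, hdeg]
      simp
    · intro z hz
      rw [SimpleGraph.mem_neighborFinset] at hz
      rw [SimpleGraph.dist_eq_one_iff_adj.2 hz.symm]
  · obtain ⟨z, hz, hd, h⟩ := hG.exists_adj_dist_add_one_eq hxy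
    have hzm : z ∈ G.neighborFinset x := by simpa using hz
    rw [← Finset.add_sum_erase _ _ hzm, ← hd, Nat.add_sub_cancel]
    congr 1
    rw [Finset.sum_congr rfl (g := fun _ => F (G.dist z y + 1 + 1))]
    · rw [Finset.sum_const, Finset.card_erase_of_mem hzm,
        SimpleGraph.card_neighborFinset_eq_degree, hdeg]
      simp
    · intro z' hz'
      rw [Finset.mem_erase, SimpleGraph.mem_neighborFinset] at hz'
      rw [h z' hz'.2 hz'.1, hd]

open Polynomial Polynomial.Chebyshev in
/-- The matrix of `U n (X)`, `X` the normalised adjacency operator of a homogeneous tree. -/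
theorem chebyshevU_adjacency_single {V : Type*} [DecidableEq V] {G : SimpleGraph V}
    [∀ v, Fintype (G.neighborSet v)] (hG : G.IsTree) {Q : ℕ} (hQ : 2 ≤ Q)
    (hdeg : ∀ v : V, G.degree v = Q + 1)
    (X : lp (fun _ : V => ℂ) 2 →L[ℂ] lp (fun _ : V => ℂ) 2)
    (hX : ∀ (f : lp (fun _ : V => ℂ) 2) (x : V),
      X f x = (2 * (√(Q : ℝ) : ℂ))⁻¹ * ∑ y ∈ G.neighborFinset x, f y) (y : V) (n : ℕ) :
    ∀ x, (aeval X (U ℂ n)) (lp.single 2 y (1 : ℂ)) x =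
      if G.dist x y ≤ n ∧ (G.dist x y + n) % 2 = 0 then ((√(Q : ℝ) : ℂ)⁻¹) ^ n else 0 := by
  have hs : (√(Q : ℝ) : ℂ) ≠ 0 := by
    simp only [ne_eq, Complex.ofReal_eq_zero]
    positivity
  have hs2 : (√(Q : ℝ) : ℂ) ^ 2 = Q := by
    rw [← Complex.ofReal_pow, Real.sq_sqrt (by positivity)]; simp
  have h0 : ∀ x, (aeval X (U ℂ (0 : ℕ))) (lp.single 2 y (1 : ℂ)) x =
      if G.dist x y ≤ 0 ∧ (G.dist x y + 0) % 2 = 0 then ((√(Q : ℝ) : ℂ)⁻¹) ^ 0 else 0 := by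
    intro x
    have : G.dist x y ≤ 0 ↔ x = y := by
      rw [Nat.le_zero, hG.connected.dist_eq_zero_iff]
    by_cases hxy : x = y
    · subst hxy; simp [U_zero]
    · have hd : G.dist x y ≠ 0 := fun h => hxy (hG.connected.dist_eq_zero_iff.1 h)
      simp [U_zero, hxy, hd]
  induction n using Nat.twoStepInduction with
  | zero => exact h0
  | one =>
    intro x
    have e : (aeval X (U ℂ ((1 : ℕ) : ℤ))) (lp.single 2 y (1 : ℂ)) =
        (2 : ℂ) • X ((aeval X (U ℂ (0 : ℕ))) (lp.single 2 y (1 : ℂ))) := by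
      simp [U_one, U_zero, two_smul, two_mul]
    rw [e, lp.coeFn_smul, Pi.smul_apply, hX]
    simp_rw [h0]
    rw [hG.sum_neighborFinset_dist hdeg
      (fun d => if d ≤ 0 ∧ (d + 0) % 2 = 0 then ((√(Q : ℝ) : ℂ)⁻¹) ^ 0 else 0)]
    by_cases hxy : x = y
    · subst hxy; simp
    · have hd : G.dist x y ≠ 0 := fun h => hxy (hG.connected.dist_eq_zero_iff.1 h)
      by_cases hd1 : G.dist x y = 1
      · simp [hxy, hd1]
        field_simp
      · have : ¬ (G.dist x y ≤ 1) := by omega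
        simp [hxy, this]
        omega
  | more n ih1 ih2 =>
    intro x
    have e : (aeval X (U ℂ ((n + 2 : ℕ) : ℤ))) (lp.single 2 y (1 : ℂ)) =
        (2 : ℂ) • X ((aeval X (U ℂ ((n + 1 : ℕ) : ℤ))) (lp.single 2 y (1 : ℂ))) -
          (aeval X (U ℂ (n : ℤ))) (lp.single 2 y (1 : ℂ)) := by
      push_cast
      rw [U_add_two]
      simp [two_smul, two_mul, add_mul]
    rw [e, lp.coeFn_sub, lp.coeFn_smul, Pi.sub_apply, Pi.smul_apply, hX, ih1]
    simp_rw [ih2]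
    rw [hG.sum_neighborFinset_dist hdeg
      (fun d => if d ≤ n + 1 ∧ (d + (n + 1)) % 2 = 0 then ((√(Q : ℝ) : ℂ)⁻¹) ^ (n + 1) else 0)]
    have hsi : (Q : ℂ) * (√(Q : ℝ) : ℂ)⁻¹ ^ 2 = 1 := by
      rw [← hs2]; field_simp
    have hA : (2 : ℂ) * ((2 * (√(Q : ℝ) : ℂ))⁻¹ * ((√(Q : ℝ) : ℂ)⁻¹) ^ (n + 1)) =
        ((√(Q : ℝ) : ℂ)⁻¹) ^ (n + 2) := by
      rw [pow_succ _ (n + 1), mul_inv]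
      ring
    have hB : (Q : ℂ) * (√(Q : ℝ) : ℂ)⁻¹ ^ (n + 2) = (√(Q : ℝ) : ℂ)⁻¹ ^ n := by
      rw [pow_add, mul_left_comm, hsi, mul_one]
    by_cases hxy : x = y
    · subst hxy
      rcases Nat.mod_two_eq_zero_or_one n with h | h
      · have h1 : (1 + (n + 1)) % 2 = 0 := by omega
        have h2 : (n + 2) % 2 = 0 := by omega
        simp [h, h1, h2]
        linear_combination ((Q : ℂ) + 1) * hA + hB
      · have h1 : ¬ (1 + (n + 1)) % 2 = 0 := by omega
        simp [h, h1]
    · have hd : G.dist x y ≠ 0 := fun h => hxy (hG.connected.dist_eq_zero_iff.1 h)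
      simp only [hxy, if_false]
      generalize G.dist x y = d at hd
      obtain ⟨d, rfl⟩ := Nat.exists_eq_succ_of_ne_zero hd
      simp only [Nat.succ_eq_add_one, Nat.add_sub_cancel, smul_eq_mul]
      by_cases hp : (d + 1 + n) % 2 = 0
      · have e1 : (d + (n + 1)) % 2 = 0 := by omega
        have e2 : (d + 1 + 1 + (n + 1)) % 2 = 0 := by omega
        have e3 : (d + 1 + (n + 2)) % 2 = 0 := by omega
        simp only [hp, e1, e2, e3, and_true]
        rcases lt_or_ge n d with h | h
        · rcases Nat.lt_or_ge (n + 1) d with h' | h'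
          · rw [if_neg (by omega), if_neg (by omega), if_neg (by omega), if_neg (by omega)]
            simp
          · rw [if_pos (by omega), if_neg (by omega), if_neg (by omega), if_pos (by omega)]
            linear_combination hA
        · rcases Nat.lt_or_ge d n with h' | h'
          · rw [if_pos (by omega), if_pos (by omega), if_pos (by omega), if_pos (by omega)]
            linear_combination ((Q : ℂ) + 1) * hA + hB
          · omega
      · have e1 : ¬ (d + (n + 1)) % 2 = 0 := by omega
        have e2 : ¬ (d + 1 + 1 + (n + 1)) % 2 = 0 := by omega
        have e3 : ¬ (d + 1 + (n + 2)) % 2 = 0 := by omega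
        simp [hp, e1, e2, e3]

/-- The normalised adjacency operator of a homogeneous tree is a contraction: Schur's test with
the weight `Q ^ (-d(x, o) / 2)`. -/
theorem norm_adjacency_le_one {V : Type*} {G : SimpleGraph V}
    [∀ v, Fintype (G.neighborSet v)] (hG : G.IsTree) {Q : ℕ} (hQ : 2 ≤ Q)
    (hdeg : ∀ v : V, G.degree v = Q + 1)
    (X : lp (fun _ : V => ℂ) 2 →L[ℂ] lp (fun _ : V => ℂ) 2)
    (hX : ∀ (f : lp (fun _ : V => ℂ) 2) (x : V),
      X f x = (2 * (√(Q : ℝ) : ℂ))⁻¹ * ∑ y ∈ G.neighborFinset x, f y) : ‖X‖ ≤ 1 := by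
  classical
  obtain ⟨o⟩ := hG.connected.nonempty
  set s : ℝ := √(Q : ℝ) with hs
  have hs0 : 0 < s := by positivity
  have hs2 : s ^ 2 = Q := Real.sq_sqrt (by positivity)
  have hQ' : (2 : ℝ) ≤ Q := by exact_mod_cast hQ
  set w : V → ℝ := fun x => (s⁻¹) ^ G.dist x o with hw
  have hw0 : ∀ x, 0 < w x := fun x => by positivity
  have hsum : ∀ x, ∑ y ∈ G.neighborFinset x, w y ≤ 2 * s * w x := by
    intro x
    rw [hG.sum_neighborFinset_dist hdeg (fun d => (s⁻¹) ^ d) x o]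
    split_ifs with h
    · subst h
      simp only [hw, SimpleGraph.dist_self, pow_zero, pow_one]
      rw [← hs2] at hQ' ⊢
      rw [← div_eq_mul_inv, div_le_iff₀ hs0]
      nlinarith
    · have hd : G.dist x o ≠ 0 := fun h' => h (hG.connected.dist_eq_zero_iff.1 h')
      obtain ⟨d, hd⟩ := Nat.exists_eq_succ_of_ne_zero hd
      simp only [hw, hd, Nat.succ_eq_add_one, Nat.add_sub_cancel]
      rw [← hs2]
      have e : s * s⁻¹ = 1 := mul_inv_cancel₀ hs0.ne'
      apply le_of_eq
      linear_combination (s⁻¹ ^ d) * (s * s⁻¹ - 1) * e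
  have h2 : (2 : ℝ≥0∞).toReal = 2 := by simp
  refine X.opNorm_le_bound zero_le_one fun f => ?_
  rw [one_mul]
  refine lp.norm_le_of_forall_sum_le (by norm_num) (norm_nonneg f) fun F => ?_
  have hpt : ∀ x, ‖X f x‖ ^ 2 ≤
      ∑ y ∈ G.neighborFinset x, w x / w y / (2 * s) * ‖f y‖ ^ 2 := by
    intro x
    have h1 : ‖X f x‖ ≤ (2 * s)⁻¹ * ∑ y ∈ G.neighborFinset x, ‖f y‖ := by
      rw [hX, norm_mul]
      have e : ‖(2 * (s : ℂ))⁻¹‖ = (2 * s)⁻¹ := by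
        rw [norm_inv, norm_mul, Complex.norm_real, Real.norm_of_nonneg hs0.le]; simp
      rw [e]
      gcongr
      exact norm_sum_le _ _
    have h3 : (∑ y ∈ G.neighborFinset x, ‖f y‖) ^ 2 ≤
        (∑ y ∈ G.neighborFinset x, w y) * ∑ y ∈ G.neighborFinset x, ‖f y‖ ^ 2 / w y := by
      apply Finset.sum_sq_le_sum_mul_sum_of_sq_le_mul
      · intro y _; exact (hw0 y).le
      · intro y _; have := hw0 y; positivity
      · intro y _; have := hw0 y; apply le_of_eq; field_simp
    have h4 : 0 ≤ ∑ y ∈ G.neighborFinset x, ‖f y‖ ^ 2 / w y :=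
      Finset.sum_nonneg fun y _ => by have := hw0 y; positivity
    calc ‖X f x‖ ^ 2 ≤ ((2 * s)⁻¹ * ∑ y ∈ G.neighborFinset x, ‖f y‖) ^ 2 := by gcongr
      _ = (2 * s)⁻¹ ^ 2 * (∑ y ∈ G.neighborFinset x, ‖f y‖) ^ 2 := mul_pow _ _ _
      _ ≤ (2 * s)⁻¹ ^ 2 * ((2 * s * w x) * ∑ y ∈ G.neighborFinset x, ‖f y‖ ^ 2 / w y) := by
        gcongr
        exact h3.trans (by gcongr; exact hsum x)
      _ = _ := by
        rw [Finset.mul_sum, Finset.mul_sum]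
        refine Finset.sum_congr rfl fun y _ => ?_
        have := hw0 y
        field_simp
  rw [h2]
  simp only [Real.rpow_ofNat]
  calc ∑ x ∈ F, ‖X f x‖ ^ 2
      ≤ ∑ x ∈ F, ∑ y ∈ G.neighborFinset x, w x / w y / (2 * s) * ‖f y‖ ^ 2 :=
        Finset.sum_le_sum fun x _ => hpt x
    _ = ∑ y ∈ F.biUnion (fun v => G.neighborFinset v), ∑ x ∈ F ∩ G.neighborFinset y,
          w x / w y / (2 * s) * ‖f y‖ ^ 2 := by
        apply Finset.sum_comm'
        intro x y
        simp only [SimpleGraph.mem_neighborFinset, Finset.mem_inter, Finset.mem_biUnion]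
        constructor
        · rintro ⟨hx, hxy⟩; exact ⟨⟨hx, hxy.symm⟩, x, hx, hxy⟩
        · rintro ⟨⟨hx, hxy⟩, _⟩; exact ⟨hx, hxy.symm⟩
    _ ≤ ∑ y ∈ F.biUnion (fun v => G.neighborFinset v), ‖f y‖ ^ 2 := by
        refine Finset.sum_le_sum fun y _ => ?_
        rw [← Finset.sum_mul]
        refine mul_le_of_le_one_left (by positivity) ?_
        have := hw0 y
        rw [← Finset.sum_div, ← Finset.sum_div, div_div, div_le_one (by positivity)]
        calc ∑ x ∈ F ∩ G.neighborFinset y, w x ≤ ∑ x ∈ G.neighborFinset y, w x :=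
              Finset.sum_le_sum_of_subset_of_nonneg Finset.inter_subset_right
                fun x _ _ => (hw0 x).le
          _ ≤ 2 * s * w y := hsum y
          _ = _ := by ring
    _ ≤ ‖f‖ ^ 2 := by
        have := lp.sum_rpow_le_norm_rpow (p := 2) (by norm_num) f (F.biUnion fun v => G.neighborFinset v)
        simpa using this

/-- The spectrum of a self-adjoint contraction is contained in `[-1, 1]`. -/
theorem exists_ofReal_of_mem_spectrum {E : Type*} [NormedAddCommGroup E] [InnerProductSpace ℂ E]
    [CompleteSpace E] [Nontrivial E] {X : E →L[ℂ] E} (hsa : IsSelfAdjoint X) (hX : ‖X‖ ≤ 1)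
    {z : ℂ} (hz : z ∈ spectrum ℂ X) : ∃ x : ℝ, x ∈ Set.Icc (-1) 1 ∧ z = x := by
  refine ⟨z.re, ?_, hsa.mem_spectrum_eq_re hz⟩
  have h1 := (spectrum.norm_le_norm_of_mem hz).trans hX
  exact abs_le.1 ((Complex.abs_re_le_norm z).trans h1)

open Polynomial Polynomial.Chebyshev in
theorem abs_eval_chebyshevU_le {x : ℝ} (hx : x ∈ Set.Icc (-1) 1) (n : ℕ) :
    |(U ℝ n).eval x| ≤ n + 1 := by
  induction n with
  | zero => simp
  | succ n ih =>
    push_cast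
    rw [U_eq_X_mul_U_add_T, eval_add, eval_mul, eval_X]
    have hx' : |x| ≤ 1 := abs_le.2 hx
    have h1 := abs_eval_T_real_le_one (n + 1 : ℤ) hx'
    calc |x * eval x (U ℝ n) + eval x (T ℝ (n + 1))|
        ≤ |x| * |eval x (U ℝ n)| + |eval x (T ℝ (n + 1))| := by
          rw [← abs_mul]; exact abs_add_le _ _
      _ ≤ 1 * (n + 1) + 1 := by gcongr
      _ = _ := by ring

open Polynomial Polynomial.Chebyshev in
theorem norm_aeval_chebyshevU_le {E : Type*} [NormedAddCommGroup E] [InnerProductSpace ℂ E]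
    [CompleteSpace E] [Nontrivial E] {X : E →L[ℂ] E} (hsa : IsSelfAdjoint X) (hX : ‖X‖ ≤ 1)
    (n : ℕ) : ‖aeval X (U ℂ n)‖ ≤ n + 1 := by
  have hn : IsStarNormal X := hsa.isStarNormal
  rw [← cfc_polynomial (U ℂ n) X]
  refine norm_cfc_le (by positivity) fun z hz => ?_
  obtain ⟨x, hx, rfl⟩ := exists_ofReal_of_mem_spectrum hsa hX hz
  rw [← complex_ofReal_eval_U, Complex.norm_real]
  exact abs_eval_chebyshevU_le hx n

/-- Interpolation between `ℓ¹ → ℓ^∞` and `ℓ² → ℓ²` bounds for a nonnegative kernel. -/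
theorem sum_mul_mul_kernel_le {ι : Type*} (S : Finset ι) {k : ι → ι → ℝ} {κ M r θ : ℝ}
    (hk : ∀ x y, 0 ≤ k x y) (hκ : ∀ x y, k x y ≤ κ) (hκ0 : 0 < κ) (hM : 0 < M)
    (hθ0 : 0 ≤ θ) (hθ1 : θ ≤ 1) (hr : r * (1 - θ / 2) = 1)
    {g h : ι → ℝ} (hg : ∀ x, 0 ≤ g x) (hh : ∀ x, 0 ≤ h x)
    (hg1 : ∑ x ∈ S, g x ^ r ≤ 1) (hh1 : ∑ x ∈ S, h x ^ r ≤ 1)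
    (h2 : ∑ x ∈ S, ∑ y ∈ S, g x ^ (r / 2) * h y ^ (r / 2) * k x y ≤ M) :
    ∑ x ∈ S, ∑ y ∈ S, g x * h y * k x y ≤ κ ^ (1 - θ) * M ^ θ := by
  have hpt : ∀ x y, g x * h y * k x y ≤ κ ^ (1 - θ) * M ^ θ *
      ((1 - θ) * (g x ^ r * h y ^ r) +
        θ / M * (g x ^ (r / 2) * h y ^ (r / 2) * k x y)) := by
    intro x y
    have hgx := hg x
    have hhy := hh y
    have hkx := hk x y
    have hsplit : ∀ u : ℝ, 0 ≤ u → u = (u ^ r) ^ (1 - θ) * (u ^ (r / 2)) ^ θ := by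
      intro u hu
      rcases hu.eq_or_lt with rfl | hu
      · have hr0 : r ≠ 0 := by rintro rfl; simp at hr
        rcases eq_or_ne θ 0 with rfl | hθ
        · simp [Real.zero_rpow hr0]
        · simp [Real.zero_rpow (div_ne_zero hr0 two_ne_zero), Real.zero_rpow hθ]
      · rw [← Real.rpow_mul hu.le, ← Real.rpow_mul hu.le, ← Real.rpow_add hu]
        have : r * (1 - θ) + r / 2 * θ = 1 := by linarith
        rw [this, Real.rpow_one]
    have key := Real.geom_mean_le_arith_mean2_weighted (by linarith : 0 ≤ 1 - θ) hθ0
      (p₁ := g x ^ r * h y ^ r * (k x y / κ))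
      (p₂ := g x ^ (r / 2) * h y ^ (r / 2) * k x y / M) (by positivity) (by positivity) (by ring)
    have e : g x * h y * k x y = κ ^ (1 - θ) * M ^ θ *
        ((g x ^ r * h y ^ r * (k x y / κ)) ^ (1 - θ) *
          (g x ^ (r / 2) * h y ^ (r / 2) * k x y / M) ^ θ) := by
      rw [Real.mul_rpow (by positivity) (by positivity), Real.mul_rpow (by positivity)
        (by positivity), Real.div_rpow (by positivity) hM.le,
        Real.mul_rpow (x := g x ^ (r / 2) * h y ^ (r / 2)) (by positivity) (by positivity),
        Real.mul_rpow (x := g x ^ (r / 2)) (by positivity) (by positivity),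
        Real.div_rpow hkx hκ0.le]
      have hk' : k x y = k x y ^ (1 - θ) * k x y ^ θ := by
        rcases hkx.eq_or_lt with h | h
        · rw [← h]
          rcases eq_or_ne θ 0 with rfl | hθ
          · simp
          · simp [Real.zero_rpow hθ]
        · rw [← Real.rpow_add h]; simp
      conv_lhs => rw [hsplit _ hgx, hsplit _ hhy, hk']
      have h1 : κ ^ (1 - θ) ≠ 0 := by positivity
      have h2 : M ^ θ ≠ 0 := by positivity
      field_simp
    rw [e]
    gcongr
    refine key.trans ?_
    have h3 : k x y / κ ≤ 1 := (div_le_one hκ0).2 (hκ x y)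
    have h4 : g x ^ r * h y ^ r * (k x y / κ) ≤ g x ^ r * h y ^ r :=
      mul_le_of_le_one_right (by positivity) h3
    have h5 : 0 ≤ 1 - θ := by linarith
    have h6 : θ * (g x ^ (r / 2) * h y ^ (r / 2) * k x y / M) =
      θ / M * (g x ^ (r / 2) * h y ^ (r / 2) * k x y) := by ring
    rw [h6]
    gcongr
  calc ∑ x ∈ S, ∑ y ∈ S, g x * h y * k x y
      ≤ ∑ x ∈ S, ∑ y ∈ S, κ ^ (1 - θ) * M ^ θ * ((1 - θ) * (g x ^ r * h y ^ r) +
        θ / M * (g x ^ (r / 2) * h y ^ (r / 2) * k x y)) :=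
        Finset.sum_le_sum fun x _ => Finset.sum_le_sum fun y _ => hpt x y
    _ = κ ^ (1 - θ) * M ^ θ * ((1 - θ) * ((∑ x ∈ S, g x ^ r) * ∑ y ∈ S, h y ^ r) +
        θ / M * ∑ x ∈ S, ∑ y ∈ S, g x ^ (r / 2) * h y ^ (r / 2) * k x y) := by
        rw [Finset.sum_mul_sum]
        simp only [Finset.mul_sum, mul_add, Finset.sum_add_distrib]
    _ ≤ κ ^ (1 - θ) * M ^ θ * ((1 - θ) * (1 * 1) + θ / M * M) := by
        have h5 : 0 ≤ 1 - θ := by linarith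
        have : 0 ≤ ∑ x ∈ S, h x ^ r := Finset.sum_nonneg fun x _ => Real.rpow_nonneg (hh x) _
        gcongr
    _ = κ ^ (1 - θ) * M ^ θ := by
        rw [div_mul_cancel₀ _ hM.ne']; ring

open Polynomial Polynomial.Chebyshev in
/-- The `ℓ^r → ℓ^{r'}` bound for `U n (X)` on finitely supported functions. -/
theorem norm_inner_chebyshevU_adjacency_le {V : Type*} [DecidableEq V] {G : SimpleGraph V}
    [∀ v, Fintype (G.neighborSet v)] (hG : G.IsTree) {Q : ℕ} (hQ : 2 ≤ Q)
    (hdeg : ∀ v : V, G.degree v = Q + 1)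
    (X : lp (fun _ : V => ℂ) 2 →L[ℂ] lp (fun _ : V => ℂ) 2)
    (hX : ∀ (f : lp (fun _ : V => ℂ) 2) (x : V),
      X f x = (2 * (√(Q : ℝ) : ℂ))⁻¹ * ∑ y ∈ G.neighborFinset x, f y)
    (n : ℕ) (hU : ‖aeval X (U ℂ n)‖ ≤ n + 1) {r θ : ℝ}
    (hθ0 : 0 ≤ θ) (hθ1 : θ ≤ 1) (hr : r * (1 - θ / 2) = 1) (S : Finset V) {g h : V → ℂ}
    (hg1 : ∑ x ∈ S, ‖g x‖ ^ r ≤ 1) (hh1 : ∑ x ∈ S, ‖h x‖ ^ r ≤ 1) :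
    ‖inner ℂ (∑ x ∈ S, lp.single 2 x (g x)) (aeval X (U ℂ n) (∑ x ∈ S, lp.single 2 x (h x)))‖ ≤
      (((√(Q : ℝ))⁻¹) ^ n) ^ (1 - θ) * ((n : ℝ) + 1) ^ θ := by
  set k : V → V → ℝ := fun x y =>
    if G.dist x y ≤ n ∧ (G.dist x y + n) % 2 = 0 then ((√(Q : ℝ))⁻¹) ^ n else 0 with hk
  have hQ0 : 0 < √(Q : ℝ) := by positivity
  have hk0 : ∀ x y, 0 ≤ k x y := fun x y => by simp only [hk]; split_ifs <;> positivity
  have hkκ : ∀ x y, k x y ≤ ((√(Q : ℝ))⁻¹) ^ n := fun x y => by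
    simp only [hk]; split_ifs
    · exact le_rfl
    · positivity
  have hinner : ∀ g h : V → ℂ,
      inner ℂ (∑ x ∈ S, lp.single 2 x (g x) : lp (fun _ : V => ℂ) 2)
        (aeval X (U ℂ n) (∑ x ∈ S, lp.single 2 x (h x))) =
      ∑ x ∈ S, ∑ y ∈ S, (starRingEnd ℂ) (g x) * (h y * k x y) := by
    intro g h
    rw [sum_inner]
    refine Finset.sum_congr rfl fun x _ => ?_
    rw [map_sum, inner_sum]
    refine Finset.sum_congr rfl fun y _ => ?_
    have e : (lp.single 2 y (h y) : lp (fun _ : V => ℂ) 2) = h y • lp.single 2 y (1 : ℂ) := by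
      rw [← lp.single_smul]; simp
    rw [lp.inner_single_left, e, map_smul, lp.coeFn_smul, Pi.smul_apply,
      chebyshevU_adjacency_single hG hQ hdeg X hX]
    simp only [hk, RCLike.inner_apply, smul_eq_mul]
    split_ifs <;> push_cast <;> ring
  have hnorm : ∀ a : V → ℂ, ‖(∑ x ∈ S, lp.single 2 x (a x) : lp (fun _ : V => ℂ) 2)‖ ^ 2 =
      ∑ x ∈ S, ‖a x‖ ^ 2 := by
    intro a
    have := lp.norm_sum_single (p := 2) (E := fun _ : V => ℂ) (by norm_num) a S
    simpa using this
  have hhalf : ∀ a : V → ℂ, ∑ x ∈ S, ‖a x‖ ^ r ≤ 1 →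
      ‖(∑ x ∈ S, lp.single 2 x ((‖a x‖ ^ (r / 2) : ℝ) : ℂ) : lp (fun _ : V => ℂ) 2)‖ ≤ 1 := by
    intro a ha
    rw [← sq_le_one_iff₀ (norm_nonneg _), hnorm]
    refine le_trans (le_of_eq (Finset.sum_congr rfl fun x _ => ?_)) ha
    rw [Complex.norm_real, Real.norm_of_nonneg (by positivity), ← Real.rpow_natCast,
      ← Real.rpow_mul (norm_nonneg _)]
    congr 1
    push_cast
    ring
  have h2 : ∑ x ∈ S, ∑ y ∈ S, ‖g x‖ ^ (r / 2) * ‖h y‖ ^ (r / 2) * k x y ≤ n + 1 := by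
    have h3 : ‖inner ℂ (∑ x ∈ S, lp.single 2 x ((‖g x‖ ^ (r / 2) : ℝ) : ℂ) : lp (fun _ : V => ℂ) 2)
        (aeval X (U ℂ n) (∑ x ∈ S, lp.single 2 x ((‖h x‖ ^ (r / 2) : ℝ) : ℂ)))‖ ≤ n + 1 := by
      refine (norm_inner_le_norm _ _).trans ?_
      calc _ ≤ 1 * (((n : ℝ) + 1) * 1) := by
            refine mul_le_mul (hhalf g hg1) ?_ (norm_nonneg _) zero_le_one
            refine (ContinuousLinearMap.le_opNorm _ _).trans ?_
            exact mul_le_mul hU (hhalf h hh1) (norm_nonneg _) (by positivity)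
        _ = n + 1 := by ring
    rw [hinner] at h3
    refine le_trans ?_ h3
    refine le_trans (le_of_eq ?_) (Complex.re_le_norm _)
    rw [← Complex.ofReal_re (∑ x ∈ S, _)]
    congr 1
    push_cast
    simp only [Complex.conj_ofReal, mul_assoc, ← Complex.ofReal_mul]
  rw [hinner]
  refine le_trans ?_ (sum_mul_mul_kernel_le S hk0 hkκ (by positivity) (by positivity) hθ0 hθ1 hr
    (fun x => norm_nonneg (g x)) (fun x => norm_nonneg (h x)) hg1 hh1 h2)
  refine (norm_sum_le _ _).trans (Finset.sum_le_sum fun x _ => ?_)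
  refine (norm_sum_le _ _).trans (Finset.sum_le_sum fun y _ => le_of_eq ?_)
  rw [norm_mul, norm_mul, Complex.norm_real, Real.norm_of_nonneg (hk0 x y), RCLike.norm_conj]
  ring

open Polynomial Polynomial.Chebyshev in
/-- The Chebyshev polynomials of the second kind span all polynomials. -/
theorem mem_span_range_chebyshevU (P : ℂ[X]) :
    P ∈ Submodule.span ℂ (Set.range fun n : ℕ => U ℂ n) := by
  set W := Submodule.span ℂ (Set.range fun n : ℕ => U ℂ n) with hW
  have hU : ∀ n : ℕ, U ℂ n ∈ W := fun n => Submodule.subset_span ⟨n, rfl⟩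
  have hX : ∀ R ∈ W, X * R ∈ W := by
    intro R hR
    induction hR using Submodule.span_induction with
    | mem R hR =>
      obtain ⟨n, rfl⟩ := hR
      have h : X * U ℂ n = (2 : ℂ)⁻¹ • (U ℂ (n + 1 : ℕ) + U ℂ (n - 1)) := by
        push_cast
        rw [U_add_one, sub_add_cancel, mul_assoc, ← C_ofNat, ← smul_eq_C_mul, smul_smul]
        norm_num
      simp only [h]
      refine W.smul_mem _ (W.add_mem (hU _) ?_)
      cases n with
      | zero => simp
      | succ n => simpa using hU n
    | zero => simp
    | add R S _ _ hR hS => rw [mul_add]; exact W.add_mem hR hS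
    | smul a R _ hR => rw [mul_smul_comm]; exact W.smul_mem _ hR
  have hpow : ∀ n : ℕ, (X ^ n : ℂ[X]) ∈ W := by
    intro n
    induction n with
    | zero => simpa using hU 0
    | succ n ih => rw [pow_succ']; exact hX _ ih
  induction P using Polynomial.induction_on' with
  | add R S hR hS => exact W.add_mem hR hS
  | monomial n a => rw [← C_mul_X_pow_eq_monomial, ← smul_eq_C_mul]; exact W.smul_mem _ (hpow n)

/-- The coefficients of a function on `[-1, 1]` with respect to the Chebyshev polynomials of the
second kind. -/
noncomputable def chebyshevUCoeff (F : ℝ → ℂ) (n : ℕ) : ℂ :=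
  (2 / Real.pi : ℝ) *
    ∫ θ in (0 : ℝ)..Real.pi, F (Real.cos θ) * (Real.sin θ * Real.sin ((n + 1) * θ) : ℝ)

theorem intervalIntegral_cos_int_mul {k : ℤ} (hk : k ≠ 0) :
    ∫ θ in (0 : ℝ)..Real.pi, Real.cos (k * θ) = 0 := by
  rw [intervalIntegral.integral_comp_mul_left _ (by exact_mod_cast hk)]
  simp

theorem intervalIntegral_sin_mul_sin (m n : ℕ) :
    ∫ θ in (0 : ℝ)..Real.pi, Real.sin ((m + 1) * θ) * Real.sin ((n + 1) * θ) =
      if m = n then Real.pi / 2 else 0 := by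
  have h : ∀ θ : ℝ, Real.sin ((m + 1) * θ) * Real.sin ((n + 1) * θ) =
      2⁻¹ * Real.cos (((m - n : ℤ) : ℝ) * θ) - 2⁻¹ * Real.cos (((m + n + 2 : ℤ) : ℝ) * θ) := by
    intro θ
    have h1 := Real.cos_sub ((m + 1) * θ) ((n + 1) * θ)
    have h2 := Real.cos_add ((m + 1) * θ) ((n + 1) * θ)
    have e1 : ((m - n : ℤ) : ℝ) * θ = (m + 1) * θ - (n + 1) * θ := by push_cast; ring
    have e2 : ((m + n + 2 : ℤ) : ℝ) * θ = (m + 1) * θ + (n + 1) * θ := by push_cast; ring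
    rw [e1, e2, h1, h2]
    ring
  simp only [h]
  rw [intervalIntegral.integral_sub, intervalIntegral.integral_const_mul,
    intervalIntegral.integral_const_mul, intervalIntegral_cos_int_mul (k := m + n + 2) (by omega)]
  · split_ifs with hmn
    · subst hmn; simp; ring
    · rw [intervalIntegral_cos_int_mul (by omega)]; simp
  all_goals exact Continuous.intervalIntegrable (by fun_prop) _ _

open Polynomial Polynomial.Chebyshev in
theorem chebyshevUCoeff_eval_U (m n : ℕ) :
    chebyshevUCoeff (fun x => (U ℂ m).eval (x : ℂ)) n = if n = m then 1 else 0 := by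
  have h : ∀ θ : ℝ, (U ℂ m).eval (Real.cos θ : ℂ) * (Real.sin θ * Real.sin ((n + 1) * θ) : ℝ) =
      ((Real.sin ((m + 1) * θ) * Real.sin ((n + 1) * θ) : ℝ) : ℂ) := by
    intro θ
    rw [← complex_ofReal_eval_U, ← Complex.ofReal_mul, ← mul_assoc, U_real_cos]
    simp
  simp only [chebyshevUCoeff, h]
  rw [intervalIntegral.integral_ofReal, intervalIntegral_sin_mul_sin, ← Complex.ofReal_mul]
  by_cases hmn : m = n
  · simp only [hmn, if_true]
    rw [div_mul_div_comm, mul_comm, div_self (by positivity)]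
    simp
  · rw [if_neg hmn, if_neg (Ne.symm hmn)]
    simp

open Polynomial Polynomial.Chebyshev in
/-- The Chebyshev expansion of a polynomial. -/
theorem exists_eq_sum_chebyshevU (P : ℂ[X]) :
    ∃ s : Finset ℕ, P = ∑ n ∈ s, chebyshevUCoeff (fun x => P.eval (x : ℂ)) n • U ℂ n := by
  obtain ⟨c, hc⟩ := Finsupp.mem_span_range_iff_exists_finsupp.1 (mem_span_range_chebyshevU P)
  refine ⟨c.support, ?_⟩
  have hcoeff : ∀ n ∈ c.support, chebyshevUCoeff (fun x => P.eval (x : ℂ)) n = c n := by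
    intro n hn
    have h : ∀ θ : ℝ, P.eval (Real.cos θ : ℂ) * (Real.sin θ * Real.sin ((n + 1) * θ) : ℝ) =
        ∑ m ∈ c.support, c m * ((U ℂ m).eval (Real.cos θ : ℂ) *
          (Real.sin θ * Real.sin ((n + 1) * θ) : ℝ)) := by
      intro θ
      rw [← hc, Finsupp.sum, eval_finsetSum, Finset.sum_mul]
      exact Finset.sum_congr rfl fun m _ => by rw [eval_smul, smul_eq_mul, mul_assoc]
    simp only [chebyshevUCoeff, h]
    rw [intervalIntegral.integral_finsetSum, Finset.mul_sum, Finset.sum_eq_single n]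
    · rw [intervalIntegral.integral_const_mul, mul_left_comm]
      have := chebyshevUCoeff_eval_U n n
      rw [chebyshevUCoeff, if_pos rfl] at this
      rw [this, mul_one]
    · intro m _ hmn
      rw [intervalIntegral.integral_const_mul, mul_left_comm]
      have := chebyshevUCoeff_eval_U m n
      rw [chebyshevUCoeff, if_neg (Ne.symm hmn)] at this
      rw [this, mul_zero]
    · intro h; exact absurd hn h
    · intro m _
      apply Continuous.intervalIntegrable
      have : Continuous fun θ : ℝ => (U ℂ m).eval (Real.cos θ : ℂ) :=
        (U ℂ m).continuous.comp (by fun_prop)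
      fun_prop
  conv_lhs => rw [← hc]
  exact Finset.sum_congr rfl fun n hn => by rw [hcoeff n hn]

theorem norm_chebyshevUCoeff_le {F : ℝ → ℂ} {c : ℝ} (hF : ∀ x ∈ Set.Icc (-1 : ℝ) 1, ‖F x‖ ≤ c)
    (n : ℕ) : ‖chebyshevUCoeff F n‖ ≤ 2 * c := by
  have hc : 0 ≤ c := (norm_nonneg _).trans (hF 0 (by simp))
  have h := intervalIntegral.norm_integral_le_of_norm_le_const (a := 0) (b := Real.pi) (C := c)
    (f := fun θ : ℝ => F (Real.cos θ) * (Real.sin θ * Real.sin ((n + 1) * θ) : ℝ)) (by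
      intro θ _
      rw [norm_mul, Complex.norm_real, norm_mul]
      calc _ ≤ c * (1 * 1) := by
            gcongr
            · exact hF _ (Real.cos_mem_Icc θ)
            · exact Real.abs_sin_le_one _
            · exact Real.abs_sin_le_one _
        _ = c := by ring)
  rw [chebyshevUCoeff, norm_mul, Complex.norm_real, Real.norm_of_nonneg (by positivity)]
  rw [sub_zero, abs_of_pos Real.pi_pos] at h
  calc _ ≤ 2 / Real.pi * (c * Real.pi) := by gcongr
    _ = 2 * c := by field_simp

theorem chebyshevUCoeff_sub {F H : ℝ → ℂ} (hF : ContinuousOn F (Set.Icc (-1) 1))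
    (hH : ContinuousOn H (Set.Icc (-1) 1)) (n : ℕ) :
    chebyshevUCoeff (fun x => F x - H x) n = chebyshevUCoeff F n - chebyshevUCoeff H n := by
  have hii : ∀ {F : ℝ → ℂ}, ContinuousOn F (Set.Icc (-1) 1) → IntervalIntegrable
      (fun θ : ℝ => F (Real.cos θ) * (Real.sin θ * Real.sin ((n + 1) * θ) : ℝ)) volume 0
        Real.pi := by
    intro F hF
    apply Continuous.intervalIntegrable
    have : Continuous fun θ => F (Real.cos θ) :=
      hF.comp_continuous Real.continuous_cos Real.cos_mem_Icc
    exact this.mul (by fun_prop)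
  simp only [chebyshevUCoeff, sub_mul]
  rw [intervalIntegral.integral_sub (hii hF) (hii hH), mul_sub]

open Polynomial in
/-- Weierstrass approximation for complex valued functions of a real variable. -/
theorem exists_complex_polynomial_near {F : ℝ → ℂ} (hF : ContinuousOn F (Set.Icc (-1) 1)) {ε : ℝ}
    (hε : 0 < ε) : ∃ P : ℂ[X], ∀ x ∈ Set.Icc (-1 : ℝ) 1, ‖P.eval (x : ℂ) - F x‖ ≤ ε := by
  obtain ⟨p, hp⟩ := exists_polynomial_near_of_continuousOn (-1) 1 (fun x => (F x).re)
    (Complex.continuous_re.comp_continuousOn hF) (ε / 2) (by positivity)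
  obtain ⟨r, hr⟩ := exists_polynomial_near_of_continuousOn (-1) 1 (fun x => (F x).im)
    (Complex.continuous_im.comp_continuousOn hF) (ε / 2) (by positivity)
  refine ⟨p.map (algebraMap ℝ ℂ) + C Complex.I * r.map (algebraMap ℝ ℂ), fun x hx => ?_⟩
  have he : ∀ s : ℝ[X], (s.map (algebraMap ℝ ℂ)).eval (x : ℂ) = (s.eval x : ℝ) := fun s => by
    rw [eval_map, ← Complex.coe_algebraMap, eval₂_at_apply]
  refine (Complex.norm_le_abs_re_add_abs_im _).trans ?_
  have h1 := hp x hx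
  have h2 := hr x hx
  simp only [eval_add, eval_mul, eval_C, he, Complex.sub_re, Complex.add_re, Complex.mul_re,
    Complex.sub_im, Complex.add_im, Complex.mul_im, Complex.ofReal_re, Complex.ofReal_im,
    Complex.I_re, Complex.I_im]
  simp only [zero_mul, mul_zero, one_mul, sub_zero, add_zero, zero_add]
  linarith

open Polynomial Polynomial.Chebyshev in
/-- Matrix coefficients of the continuous functional calculus are controlled by the Chebyshev
coefficients of the function. -/
theorem norm_inner_cfc_le_tsum {E : Type*} [NormedAddCommGroup E] [InnerProductSpace ℂ E]
    [CompleteSpace E] [Nontrivial E] {X : E →L[ℂ] E} (hsa : IsSelfAdjoint X) (hX : ‖X‖ ≤ 1)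
    {g h : E} {u B : ℕ → ℝ} (hu : ∀ n : ℕ, ‖inner ℂ g (aeval X (U ℂ n) h)‖ ≤ u n)
    (hus : Summable u) {f : ℂ → ℂ} (hf : ContinuousOn (fun x : ℝ => f x) (Set.Icc (-1) 1))
    (hB : ∀ n, ‖chebyshevUCoeff (fun x => f x) n‖ ≤ B n) (hBs : Summable fun n => B n * u n) :
    ‖inner ℂ g (cfc f X h)‖ ≤ ∑' n, B n * u n := by
  have hu0 : ∀ n, 0 ≤ u n := fun n => (norm_nonneg _).trans (hu n)
  have hB0 : ∀ n, 0 ≤ B n := fun n => (norm_nonneg _).trans (hB n)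
  have hfs : ContinuousOn f (spectrum ℂ X) := by
    have h1 : ContinuousOn (fun z : ℂ => f (z.re : ℂ)) (spectrum ℂ X) := by
      refine hf.comp Complex.continuous_re.continuousOn fun z hz => ?_
      obtain ⟨x, hx, rfl⟩ := exists_ofReal_of_mem_spectrum hsa hX hz
      simpa using hx
    refine h1.congr fun z hz => ?_
    obtain ⟨x, hx, rfl⟩ := exists_ofReal_of_mem_spectrum hsa hX hz
    simp
  have key : ∀ ε > 0, ‖inner ℂ g (cfc f X h)‖ ≤
      (∑' n, B n * u n) + ε * (2 * ∑' n, u n + ‖g‖ * ‖h‖) := by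
    intro ε hε
    obtain ⟨P, hP⟩ := exists_complex_polynomial_near hf hε
    obtain ⟨s, hs⟩ := exists_eq_sum_chebyshevU P
    have hPc : ContinuousOn (fun x : ℝ => P.eval (x : ℂ)) (Set.Icc (-1) 1) :=
      (P.continuous.comp Complex.continuous_ofReal).continuousOn
    have hcoeff : ∀ n, ‖chebyshevUCoeff (fun x => P.eval (x : ℂ)) n‖ ≤ B n + 2 * ε := by
      intro n
      have h1 := norm_chebyshevUCoeff_le (F := fun x : ℝ => P.eval (x : ℂ) - f x) hP n
      rw [chebyshevUCoeff_sub hPc hf] at h1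
      have h2 := norm_le_norm_add_norm_sub' (chebyshevUCoeff (fun x => P.eval (x : ℂ)) n)
        (chebyshevUCoeff (fun x => f x) n)
      linarith [hB n]
    have hdiff : ‖cfc f X - aeval X P‖ ≤ ε := by
      rw [← cfc_polynomial P X hsa.isStarNormal, ← cfc_sub f P.eval X hfs P.continuousOn]
      refine norm_cfc_le hε.le fun z hz => ?_
      obtain ⟨x, hx, rfl⟩ := exists_ofReal_of_mem_spectrum hsa hX hz
      rw [norm_sub_rev]
      exact hP x hx
    have h1 : ‖inner ℂ g (aeval X P h)‖ ≤ (∑' n, B n * u n) + 2 * ε * ∑' n, u n := by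
      rw [← tsum_mul_left, ← hBs.tsum_add (hus.mul_left _)]
      have e : inner ℂ g (aeval X P h) = ∑ n ∈ s, chebyshevUCoeff (fun x => P.eval (x : ℂ)) n *
          inner ℂ g (aeval X (U ℂ n) h) := by
        conv_lhs => rw [hs]
        rw [map_sum, sum_apply, inner_sum]
        refine Finset.sum_congr rfl fun n _ => ?_
        rw [map_smul, smul_apply, inner_smul_right]
      rw [e]
      refine (norm_sum_le _ _).trans ?_
      refine le_trans (Finset.sum_le_sum fun n _ => ?_)
        ((hBs.add (hus.mul_left (2 * ε))).sum_le_tsum s fun n _ => ?_)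
      · rw [norm_mul, ← add_mul]
        exact mul_le_mul (hcoeff n) (hu n) (norm_nonneg _) (by have := hB0 n; positivity)
      · have := hB0 n
        have := hu0 n
        positivity
    have h2 : ‖inner ℂ g ((cfc f X - aeval X P) h)‖ ≤ ε * (‖g‖ * ‖h‖) := by
      refine (norm_inner_le_norm _ _).trans ?_
      rw [mul_left_comm]
      gcongr
      exact (ContinuousLinearMap.le_opNorm _ _).trans (by gcongr)
    have e : inner ℂ g (cfc f X h) =
        inner ℂ g (aeval X P h) + inner ℂ g ((cfc f X - aeval X P) h) := by
      rw [← inner_add_right, sub_apply, add_sub_cancel]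
    rw [e]
    refine (norm_add_le _ _).trans ((add_le_add h1 h2).trans (le_of_eq ?_))
    ring
  have hlim : Filter.Tendsto (fun ε : ℝ => (∑' n, B n * u n) +
      ε * (2 * ∑' n, u n + ‖g‖ * ‖h‖)) (nhdsWithin 0 (Set.Ioi 0)) (nhds (∑' n, B n * u n)) := by
    refine Filter.Tendsto.mono_left ?_ nhdsWithin_le_nhds
    have : Continuous fun ε : ℝ => (∑' n, B n * u n) +
      ε * (2 * ∑' n, u n + ‖g‖ * ‖h‖) := by fun_prop
    simpa using this.tendsto 0
  exact ge_of_tendsto hlim (eventually_mem_nhdsWithin.mono fun ε hε => key ε hε)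

/-- A van der Corput type estimate on `[0, π]` for a phase whose derivative vanishes like `sin` at
both ends of the interval. -/
theorem norm_integral_oscillatory_le {φ φ' : ℝ → ℂ} {w g k' : ℝ → ℝ} {t δ A : ℝ}
    (hδ0 : 0 < δ) (hδ1 : δ ≤ 1) (hδt : |t| * δ ^ 3 = 1)
    (hφ : ∀ θ, HasDerivAt φ (φ' θ) θ) (hφ'c : Continuous φ')
    (hφ' : ∀ θ, φ' θ * w θ = Complex.I * t * Real.sin θ * φ θ) (hφ1 : ∀ θ, ‖φ θ‖ ≤ 1)
    (hg : Continuous g) (hk : ∀ θ, HasDerivAt (fun θ => w θ * g θ) (k' θ) θ) (hk' : Continuous k')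
    (hgA : ∀ θ ∈ Set.Icc 0 Real.pi, |g θ| ≤ A) (hkA : ∀ θ ∈ Set.Icc 0 Real.pi, |w θ * g θ| ≤ A)
    (hk'A : ∀ θ ∈ Set.Icc 0 Real.pi, |k' θ| ≤ A) :
    ‖∫ θ in (0 : ℝ)..Real.pi, φ θ * g θ‖ ≤ (2 + (1 + Real.pi) * Real.pi ^ 2 / 2) * A * δ := by
  have hπ := Real.pi_gt_three
  have hA : 0 ≤ A := (abs_nonneg _).trans (hgA 0 ⟨le_rfl, Real.pi_pos.le⟩)
  have ht : 0 < |t| := by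
    rcases eq_or_lt_of_le (abs_nonneg t) with h | h
    · rw [← h] at hδt; simp at hδt
    · exact h
  have hφc : Continuous φ := continuous_iff_continuousAt.2 fun θ => (hφ θ).continuousAt
  have hii : ∀ a b : ℝ, IntervalIntegrable (fun θ => φ θ * g θ) volume a b := fun a b =>
    Continuous.intervalIntegrable (by fun_prop) a b
  have htriv : ∀ a b : ℝ, 0 ≤ a → a ≤ b → b ≤ Real.pi →
      ‖∫ θ in a..b, φ θ * g θ‖ ≤ A * (b - a) := by
    intro a b ha hab hb
    have := intervalIntegral.norm_integral_le_of_norm_le_const (a := a) (b := b) (C := A)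
      (f := fun θ => φ θ * g θ) (by
        intro θ hθ
        rw [Set.uIoc_of_le hab] at hθ
        rw [norm_mul, Complex.norm_real]
        calc _ ≤ 1 * A := mul_le_mul (hφ1 θ) (hgA θ ⟨ha.trans hθ.1.le, hθ.2.trans hb⟩)
              (abs_nonneg _) zero_le_one
          _ = A := one_mul A)
    rwa [abs_of_nonneg (sub_nonneg.2 hab)] at this
  set σ : ℝ := 2 / Real.pi * δ with hσ
  have hσ0 : 0 < σ := by positivity
  have hsin : ∀ θ ∈ Set.Icc δ (Real.pi - δ), σ ≤ Real.sin θ := by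
    intro θ hθ
    have hc : 0 < 2 / Real.pi := by positivity
    rcases le_total θ (Real.pi / 2) with h | h
    · exact (mul_le_mul_of_nonneg_left hθ.1 hc.le).trans
        (Real.mul_le_sin (hδ0.le.trans hθ.1) h)
    · rw [← Real.sin_pi_sub]
      exact (mul_le_mul_of_nonneg_left (by linarith [hθ.2]) hc.le).trans
        (Real.mul_le_sin (by linarith [hθ.2]) (by linarith))
  have hle : δ ≤ Real.pi - δ := by linarith
  have hσ1 : σ ≤ 1 := (hsin δ ⟨le_rfl, hle⟩).trans (Real.sin_le_one _)
  have hmem : ∀ θ ∈ Set.Icc δ (Real.pi - δ), θ ∈ Set.Icc 0 Real.pi := fun θ hθ =>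
    ⟨hδ0.le.trans hθ.1, by linarith [hθ.2]⟩
  set K : ℝ → ℂ := fun θ => ((w θ * g θ / Real.sin θ : ℝ) : ℂ) with hK
  set K' : ℝ → ℂ := fun θ =>
    (((k' θ * Real.sin θ - w θ * g θ * Real.cos θ) / Real.sin θ ^ 2 : ℝ) : ℂ) with hK'
  have hKd : ∀ θ ∈ Set.Icc δ (Real.pi - δ), HasDerivAt K (K' θ) θ := by
    intro θ hθ
    exact ((hk θ).div (Real.hasDerivAt_sin θ) (hσ0.trans_le (hsin θ hθ)).ne').ofReal_comp
  have hkc : Continuous fun θ => w θ * g θ :=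
    continuous_iff_continuousAt.2 fun θ => (hk θ).continuousAt
  have hK'c : ContinuousOn K' (Set.Icc δ (Real.pi - δ)) := by
    refine Complex.continuous_ofReal.comp_continuousOn (ContinuousOn.div ?_ ?_ ?_)
    · exact ((hk'.mul Real.continuous_sin).sub (hkc.mul Real.continuous_cos)).continuousOn
    · fun_prop
    · intro θ hθ
      exact (pow_pos (hσ0.trans_le (hsin θ hθ)) 2).ne'
  have hKb : ∀ θ ∈ Set.Icc δ (Real.pi - δ), ‖φ θ * K θ‖ ≤ A / σ ^ 2 := by
    intro θ hθ
    have hs := hsin θ hθ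
    have hs0 : 0 < Real.sin θ := hσ0.trans_le hs
    rw [norm_mul, hK, Complex.norm_real, Real.norm_eq_abs, abs_div, abs_of_pos hs0]
    calc _ ≤ 1 * (A / σ ^ 2) := by
          refine mul_le_mul (hφ1 θ) ?_ (by positivity) zero_le_one
          refine div_le_div₀ hA (hkA θ (hmem θ hθ)) (by positivity) ?_
          nlinarith
      _ = _ := one_mul _
  have hK'b : ∀ θ ∈ Set.Icc δ (Real.pi - δ), ‖φ θ * K' θ‖ ≤ 2 * A / σ ^ 2 := by
    intro θ hθ
    have hs := hsin θ hθ
    have hs0 : 0 < Real.sin θ := hσ0.trans_le hs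
    rw [norm_mul, hK', Complex.norm_real, Real.norm_eq_abs, abs_div, abs_of_pos (pow_pos hs0 2)]
    calc _ ≤ 1 * (2 * A / σ ^ 2) := by
          refine mul_le_mul (hφ1 θ) ?_ (by positivity) zero_le_one
          refine div_le_div₀ (by positivity) ?_ (by positivity) (by gcongr)
          refine (abs_sub _ _).trans ?_
          rw [abs_mul, abs_mul (w θ * g θ)]
          have h1 := mul_le_mul (hk'A θ (hmem θ hθ)) (Real.abs_sin_le_one θ) (abs_nonneg _) hA
          have h2 := mul_le_mul (hkA θ (hmem θ hθ)) (Real.abs_cos_le_one θ) (abs_nonneg _) hA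
          linarith
      _ = _ := one_mul _
  have hmid : |t| * ‖∫ θ in δ..(Real.pi - δ), φ θ * g θ‖ ≤ (2 + 2 * Real.pi) * (A / σ ^ 2) := by
    have hibp := intervalIntegral.integral_deriv_mul_eq_sub
      (a := δ) (b := Real.pi - δ) (u := φ) (v := K) (u' := φ') (v' := K')
      (fun θ _ => hφ θ) (fun θ hθ => hKd θ (by rwa [Set.uIcc_of_le hle] at hθ))
      (hφ'c.intervalIntegrable _ _)
      (ContinuousOn.intervalIntegrable (by rwa [Set.uIcc_of_le hle]))
    have e : ∫ θ in δ..(Real.pi - δ), φ' θ * K θ + φ θ * K' θ =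
        Complex.I * t * (∫ θ in δ..(Real.pi - δ), φ θ * g θ) +
          ∫ θ in δ..(Real.pi - δ), φ θ * K' θ := by
      rw [← intervalIntegral.integral_const_mul, ← intervalIntegral.integral_add]
      · refine intervalIntegral.integral_congr fun θ hθ => ?_
        rw [Set.uIcc_of_le hle] at hθ
        have hs0 : (Real.sin θ : ℂ) ≠ 0 := by
          exact_mod_cast (hσ0.trans_le (hsin θ hθ)).ne'
        simp only [hK]
        push_cast
        push_cast at hs0
        have := hφ' θ
        push_cast at this
        congr 1
        rw [mul_div_assoc', div_eq_iff hs0, ← mul_assoc, this]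
        ring
      · exact (hii _ _).const_mul _
      · exact ContinuousOn.intervalIntegrable (by
          rw [Set.uIcc_of_le hle]; exact hφc.continuousOn.mul hK'c)
    rw [e] at hibp
    have h1 : Complex.I * t * (∫ θ in δ..(Real.pi - δ), φ θ * g θ) =
        φ (Real.pi - δ) * K (Real.pi - δ) - φ δ * K δ -
          ∫ θ in δ..(Real.pi - δ), φ θ * K' θ := by rw [← hibp]; ring
    have h2 : ‖∫ θ in δ..(Real.pi - δ), φ θ * K' θ‖ ≤ 2 * A / σ ^ 2 * Real.pi := by
      refine (intervalIntegral.norm_integral_le_of_norm_le_const (C := 2 * A / σ ^ 2)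
        fun θ hθ => ?_).trans ?_
      · rw [Set.uIoc_of_le hle] at hθ
        exact hK'b θ ⟨hθ.1.le, hθ.2⟩
      · gcongr
        rw [abs_of_nonneg (by linarith)]
        linarith
    have h3 : |t| * ‖∫ θ in δ..(Real.pi - δ), φ θ * g θ‖ =
        ‖Complex.I * t * (∫ θ in δ..(Real.pi - δ), φ θ * g θ)‖ := by
      rw [norm_mul, norm_mul, Complex.norm_I, Complex.norm_real, one_mul, Real.norm_eq_abs]
    rw [h3, h1]
    calc _ ≤ A / σ ^ 2 + A / σ ^ 2 + 2 * A / σ ^ 2 * Real.pi := by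
          refine (norm_sub_le _ _).trans (add_le_add ((norm_sub_le _ _).trans (add_le_add ?_ ?_)) h2)
          · exact hKb _ ⟨hle, le_rfl⟩
          · exact hKb _ ⟨le_rfl, hle⟩
      _ = _ := by ring
  have hsplit : ∫ θ in (0 : ℝ)..Real.pi, φ θ * g θ = (∫ θ in (0 : ℝ)..δ, φ θ * g θ) +
      (∫ θ in δ..(Real.pi - δ), φ θ * g θ) + ∫ θ in (Real.pi - δ)..Real.pi, φ θ * g θ := by
    rw [intervalIntegral.integral_add_adjacent_intervals (hii _ _) (hii _ _),
      intervalIntegral.integral_add_adjacent_intervals (hii _ _) (hii _ _)]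
  have hm : ‖∫ θ in δ..(Real.pi - δ), φ θ * g θ‖ ≤ (1 + Real.pi) * Real.pi ^ 2 / 2 * A * δ := by
    refine le_of_mul_le_mul_left (hmid.trans (le_of_eq ?_)) ht
    have : |t| = 1 / δ ^ 3 := by field_simp; exact hδt
    rw [this, hσ]
    field_simp
  have h1 := htriv 0 δ le_rfl hδ0.le (by linarith)
  have h2 := htriv (Real.pi - δ) Real.pi (by linarith) (by linarith) le_rfl
  rw [hsplit]
  refine (norm_add_le _ _).trans ((add_le_add_left (norm_add_le _ _) _).trans ?_)
  calc _ ≤ A * (δ - 0) + (1 + Real.pi) * Real.pi ^ 2 / 2 * A * δ + A * (Real.pi - (Real.pi - δ)) :=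
        add_le_add (add_le_add h1 hm) h2
    _ = _ := by ring

theorem norm_integral_oscillatory_sin_mul_sin_le {φ φ' : ℝ → ℂ} {w w' w'' : ℝ → ℝ} {t δ W : ℝ}
    (hδ0 : 0 < δ) (hδ1 : δ ≤ 1) (hδt : |t| * δ ^ 3 = 1)
    (hφ : ∀ θ, HasDerivAt φ (φ' θ) θ) (hφ'c : Continuous φ')
    (hφ' : ∀ θ, φ' θ * w θ = Complex.I * t * Real.sin θ * φ θ) (hφ1 : ∀ θ, ‖φ θ‖ ≤ 1)
    (hw : ∀ θ, HasDerivAt w (w' θ) θ) (hw' : ∀ θ, HasDerivAt w' (w'' θ) θ)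
    (hw''c : Continuous w'') (hW1 : 1 ≤ W) (hwW : ∀ θ ∈ Set.Icc 0 Real.pi, |w θ| ≤ W)
    (hw'W : ∀ θ ∈ Set.Icc 0 Real.pi, |w' θ| ≤ W) (hw''W : ∀ θ ∈ Set.Icc 0 Real.pi, |w'' θ| ≤ W)
    (n : ℕ) :
    ‖∫ θ in (0 : ℝ)..Real.pi, φ θ * (Real.sin θ * Real.sin ((n + 1) * θ) : ℝ)‖ ≤
      (2 + (1 + Real.pi) * Real.pi ^ 2 / 2) * (6 * ((n : ℝ) + 1) ^ 2 * W ^ 2) * δ ^ 4 := by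
  set m : ℝ := (n : ℝ) + 1 with hm
  have hm1 : 1 ≤ m := by simp [hm]
  have ht : 0 < |t| := by
    rcases eq_or_lt_of_le (abs_nonneg t) with h | h
    · rw [← h] at hδt; simp at hδt
    · exact h
  have hwc : Continuous w := continuous_iff_continuousAt.2 fun θ => (hw θ).continuousAt
  have hw'c : Continuous w' := continuous_iff_continuousAt.2 fun θ => (hw' θ).continuousAt
  have hφc : Continuous φ := continuous_iff_continuousAt.2 fun θ => (hφ θ).continuousAt
  have hS : ∀ θ, HasDerivAt (fun θ => Real.sin (m * θ)) (m * Real.cos (m * θ)) θ := fun θ => by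
    have := (Real.hasDerivAt_sin (m * θ)).comp θ ((hasDerivAt_id θ).const_mul m)
    simpa [mul_comm, Function.comp_def] using this
  have hC : ∀ θ, HasDerivAt (fun θ => Real.cos (m * θ)) (-(m * Real.sin (m * θ))) θ := fun θ => by
    have := (Real.hasDerivAt_cos (m * θ)).comp θ ((hasDerivAt_id θ).const_mul m)
    simpa [mul_comm, Function.comp_def] using this
  set g : ℝ → ℝ := fun θ => w' θ * Real.sin (m * θ) + w θ * (m * Real.cos (m * θ)) with hg
  set g' : ℝ → ℝ := fun θ => w'' θ * Real.sin (m * θ) + w' θ * (m * Real.cos (m * θ)) +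
    (w' θ * (m * Real.cos (m * θ)) + w θ * (m * -(m * Real.sin (m * θ)))) with hg'
  have hwS : ∀ θ, HasDerivAt (fun θ => w θ * Real.sin (m * θ)) (g θ) θ := fun θ =>
    (hw θ).mul (hS θ)
  have hgd : ∀ θ, HasDerivAt g (g' θ) θ := fun θ =>
    ((hw' θ).mul (hS θ)).add ((hw θ).mul ((hC θ).const_mul m))
  have hgc : Continuous g := by fun_prop
  have hs : ∀ θ, |Real.sin (m * θ)| ≤ 1 := fun θ => Real.abs_sin_le_one _
  have hc : ∀ θ, |Real.cos (m * θ)| ≤ 1 := fun θ => Real.abs_cos_le_one _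
  have hprod : ∀ {a b A B : ℝ}, |a| ≤ A → |b| ≤ B → |a * b| ≤ A * B := fun ha hb => by
    rw [abs_mul]
    exact mul_le_mul ha hb (abs_nonneg _) ((abs_nonneg _).trans ha)
  have hmm : |m| ≤ m := (abs_of_pos (by positivity)).le
  have hgb : ∀ θ ∈ Set.Icc 0 Real.pi, |g θ| ≤ 2 * m * W := by
    intro θ hθ
    have h1 := hprod (hw'W θ hθ) (hs θ)
    have h2 := hprod (hwW θ hθ) (hprod hmm (hc θ))
    refine (abs_add_le _ _).trans ((add_le_add h1 h2).trans ?_)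
    nlinarith
  have hg'b : ∀ θ ∈ Set.Icc 0 Real.pi, |g' θ| ≤ 4 * m ^ 2 * W := by
    intro θ hθ
    have h1 := hprod (hw''W θ hθ) (hs θ)
    have h2 := hprod (hw'W θ hθ) (hprod hmm (hc θ))
    have h3 := hprod (hwW θ hθ) (hprod hmm ((abs_neg _).le.trans (hprod hmm (hs θ))))
    refine (abs_add_le _ _).trans ((add_le_add ((abs_add_le _ _).trans (add_le_add h1 h2))
      ((abs_add_le _ _).trans (add_le_add h2 h3))).trans ?_)
    have : m ≤ m ^ 2 := by nlinarith
    nlinarith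
  have hmain := norm_integral_oscillatory_le (g := g) (k' := fun θ => w' θ * g θ + w θ * g' θ)
    (A := 6 * m ^ 2 * W ^ 2) hδ0 hδ1 hδt hφ hφ'c hφ' hφ1 hgc (fun θ => (hw θ).mul (hgd θ))
    (by fun_prop) (fun θ hθ => (hgb θ hθ).trans ?_)
    (fun θ hθ => (hprod (hwW θ hθ) (hgb θ hθ)).trans ?_)
    (fun θ hθ => (abs_add_le _ _).trans ((add_le_add (hprod (hw'W θ hθ) (hgb θ hθ))
      (hprod (hwW θ hθ) (hg'b θ hθ))).trans ?_))
  rotate_left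
  · have h1 : m ≤ m ^ 2 := by nlinarith
    have h2 : W ≤ W ^ 2 := by nlinarith
    have h3 := mul_le_mul h1 h2 (by positivity) (by positivity)
    nlinarith
  · have h1 : m ≤ m ^ 2 := by nlinarith
    nlinarith [mul_le_mul_of_nonneg_right h1 (sq_nonneg W)]
  · have h1 : m ≤ m ^ 2 := by nlinarith
    nlinarith [mul_le_mul_of_nonneg_right h1 (sq_nonneg W)]
  have hibp := intervalIntegral.integral_deriv_mul_eq_sub (a := 0) (b := Real.pi) (u := φ)
    (v := fun θ => ((w θ * Real.sin (m * θ) : ℝ) : ℂ)) (u' := φ') (v' := fun θ => (g θ : ℂ))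
    (fun θ _ => hφ θ) (fun θ _ => (hwS θ).ofReal_comp) (hφ'c.intervalIntegrable _ _)
    (Continuous.intervalIntegrable (by fun_prop) _ _)
  have hsinm : Real.sin (m * Real.pi) = 0 := by
    rw [hm]; exact_mod_cast Real.sin_nat_mul_pi (n + 1)
  have e : ∫ θ in (0 : ℝ)..Real.pi, φ' θ * ((w θ * Real.sin (m * θ) : ℝ) : ℂ) + φ θ * g θ =
      Complex.I * t * (∫ θ in (0 : ℝ)..Real.pi, φ θ * (Real.sin θ * Real.sin (m * θ) : ℝ)) +
        ∫ θ in (0 : ℝ)..Real.pi, φ θ * g θ := by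
    rw [← intervalIntegral.integral_const_mul, ← intervalIntegral.integral_add]
    · refine intervalIntegral.integral_congr fun θ _ => ?_
      have := hφ' θ
      rw [Complex.ofReal_mul, ← mul_assoc, this]
      push_cast
      ring
    · exact Continuous.intervalIntegrable (by fun_prop) _ _
    · exact Continuous.intervalIntegrable (by fun_prop) _ _
  rw [e, hsinm] at hibp
  simp only [mul_zero, Real.sin_zero, Complex.ofReal_zero, sub_zero] at hibp
  have h1 : |t| * ‖∫ θ in (0 : ℝ)..Real.pi, φ θ * (Real.sin θ * Real.sin (m * θ) : ℝ)‖ =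
      ‖∫ θ in (0 : ℝ)..Real.pi, φ θ * g θ‖ := by
    rw [← norm_neg (∫ θ in (0 : ℝ)..Real.pi, φ θ * g θ), ← eq_neg_of_add_eq_zero_left hibp,
      norm_mul, norm_mul, Complex.norm_I, Complex.norm_real, one_mul, Real.norm_eq_abs]
  refine le_of_mul_le_mul_left (h1.le.trans (hmain.trans (le_of_eq ?_))) ht
  linear_combination (-(2 + (1 + Real.pi) * Real.pi ^ 2 / 2) * (6 * m ^ 2 * W ^ 2) * δ) * hδt

/-- Decay of the Chebyshev coefficients of `exp (i t (1 - γ x) ^ a)`. -/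
theorem exists_norm_chebyshevUCoeff_exp_le {γ a : ℝ} (hγ0 : 0 < γ) (hγ1 : γ < 1) (ha : 0 < a) :
    ∃ C, 0 < C ∧ ∀ (t δ : ℝ), 0 < δ → δ ≤ 1 → |t| * δ ^ 3 = 1 → ∀ n : ℕ,
      ‖chebyshevUCoeff (fun x => Complex.exp (Complex.I * t * ((1 - γ * x) ^ a : ℝ))) n‖ ≤
        C * ((n : ℝ) + 1) ^ 2 * δ ^ 4 := by
  have hv : ∀ θ, 0 < 1 - γ * Real.cos θ := fun θ => by nlinarith [Real.cos_le_one θ]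
  set w : ℝ → ℝ := fun θ => (1 - γ * Real.cos θ) ^ (1 - a) / (a * γ) with hw
  have hvc : ContDiff ℝ 2 fun θ => 1 - γ * Real.cos θ := by fun_prop
  have hwc : ContDiff ℝ 2 w := (hvc.rpow_const_of_ne fun θ => (hv θ).ne').div_const _
  have hw'c : ContDiff ℝ 1 (deriv w) := ((contDiff_succ_iff_deriv (n := 1)).1 hwc).2.2
  have hw''c : Continuous (deriv (deriv w)) := hw'c.continuous_deriv le_rfl
  obtain ⟨W0, hW0⟩ := isCompact_Icc.exists_bound_of_continuousOn
    (s := Set.Icc 0 Real.pi) hwc.continuous.continuousOn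
  obtain ⟨W1, hW1⟩ := isCompact_Icc.exists_bound_of_continuousOn
    (s := Set.Icc 0 Real.pi) hw'c.continuous.continuousOn
  obtain ⟨W2, hW2⟩ := isCompact_Icc.exists_bound_of_continuousOn
    (s := Set.Icc 0 Real.pi) hw''c.continuousOn
  set W : ℝ := max 1 (max W0 (max W1 W2)) with hW
  have hWpos : 0 < W := lt_of_lt_of_le one_pos (le_max_left _ _)
  refine ⟨2 / Real.pi * ((2 + (1 + Real.pi) * Real.pi ^ 2 / 2) * (6 * W ^ 2)), by positivity,
    fun t δ hδ0 hδ1 hδt n => ?_⟩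
  have hh : ∀ θ, HasDerivAt (fun θ => (1 - γ * Real.cos θ) ^ a)
      (γ * Real.sin θ * a * (1 - γ * Real.cos θ) ^ (a - 1)) θ := fun θ => by
    have h1 : HasDerivAt (fun θ => 1 - γ * Real.cos θ) (γ * Real.sin θ) θ := by
      simpa using ((Real.hasDerivAt_cos θ).const_mul γ).const_sub 1
    exact h1.rpow_const (Or.inl (hv θ).ne')
  have hφ : ∀ θ : ℝ, HasDerivAt
      (fun θ : ℝ => Complex.exp (Complex.I * t * ((1 - γ * Real.cos θ) ^ a : ℝ)))
      (Complex.exp (Complex.I * t * ((1 - γ * Real.cos θ) ^ a : ℝ)) *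
        (Complex.I * t * (γ * Real.sin θ * a * (1 - γ * Real.cos θ) ^ (a - 1) : ℝ))) θ := fun θ =>
    ((hh θ).ofReal_comp.const_mul (Complex.I * t)).cexp
  have hrc : ∀ b : ℝ, Continuous fun θ => (1 - γ * Real.cos θ) ^ b := fun b =>
    Continuous.rpow_const (by fun_prop) fun θ => Or.inl (hv θ).ne'
  have hφ1 : ∀ θ : ℝ, ‖Complex.exp (Complex.I * t * ((1 - γ * Real.cos θ) ^ a : ℝ))‖ ≤ 1 := by
    intro θ
    rw [mul_assoc, ← Complex.ofReal_mul, mul_comm, Complex.norm_exp_ofReal_mul_I]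
  have := norm_integral_oscillatory_sin_mul_sin_le (W := W) (w := w) (w' := deriv w)
    (w'' := deriv (deriv w)) hδ0 hδ1 hδt hφ (by have := hrc a; have := hrc (a - 1); fun_prop)
    (fun θ => ?_) hφ1 (fun θ => (hwc.differentiable (by norm_num) θ).hasDerivAt)
    (fun θ => (hw'c.differentiable (by norm_num) θ).hasDerivAt) hw''c (le_max_left _ _)
    (fun θ hθ => (hW0 θ hθ).trans (by simp [hW])) (fun θ hθ => (hW1 θ hθ).trans (by simp [hW]))
    (fun θ hθ => (hW2 θ hθ).trans (by simp [hW])) n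
  · rw [chebyshevUCoeff, norm_mul, Complex.norm_real, Real.norm_of_nonneg (by positivity)]
    refine (mul_le_mul_of_nonneg_left this (by positivity)).trans (le_of_eq ?_)
    ring
  · have e : γ * Real.sin θ * a * (1 - γ * Real.cos θ) ^ (a - 1) * w θ = Real.sin θ := by
      have h1 : (1 - γ * Real.cos θ) ^ (a - 1) * (1 - γ * Real.cos θ) ^ (1 - a) = 1 := by
        rw [← Real.rpow_add (hv θ)]; simp
      simp only [hw]
      field_simp
      linear_combination Real.sin θ * h1
    rw [mul_assoc, mul_assoc (Complex.I * t), ← Complex.ofReal_mul, e]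
    ring

/-- The discrete `T T*` argument. -/
theorem sum_sq_le_of_norm_inner_le {E : Type*} [NormedAddCommGroup E] [InnerProductSpace ℂ E]
    [CompleteSpace E] {T : ℤ → E →L[ℂ] E} (hstar : ∀ j, star (T j) = T (-j))
    (hadd : ∀ j k, T (j + k) = T j * T k) {K : ℤ → ℝ} (hK0 : ∀ j, 0 ≤ K j) (hK : Summable K)
    (J : Finset ℤ) {v : ℤ → E} (hv : ∀ j k, ‖inner ℂ (v j) (T (j - k) (v k))‖ ≤ K (j - k))
    {N : ℤ → ℝ} (hN0 : ∀ j, 0 ≤ N j) {f : E} (hN : ∀ j, inner ℂ (v j) (T j f) = (N j : ℂ)) :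
    ∑ j ∈ J, N j ^ 2 ≤ (∑' j, K j) * ‖f‖ ^ 2 := by
  set A := ∑ j ∈ J, N j ^ 2 with hA
  have hA0 : 0 ≤ A := Finset.sum_nonneg fun j _ => sq_nonneg _
  have hadj : ∀ j x y, inner ℂ (T (-j) x) y = inner ℂ x (T j y) := fun j x y => by
    rw [← hstar, ContinuousLinearMap.star_eq_adjoint, ContinuousLinearMap.adjoint_inner_left]
  set Φ : E := ∑ j ∈ J, (N j : ℂ) • T (-j) (v j) with hΦ
  have hΦf : inner ℂ Φ f = (A : ℂ) := by
    rw [hΦ, sum_inner, hA, Complex.ofReal_sum]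
    refine Finset.sum_congr rfl fun j _ => ?_
    rw [inner_smul_left, hadj, hN, Complex.conj_ofReal]
    push_cast
    ring
  have hAle : A ≤ ‖Φ‖ * ‖f‖ := by
    have := norm_inner_le_norm (𝕜 := ℂ) Φ f
    rwa [hΦf, Complex.norm_real, Real.norm_of_nonneg hA0] at this
  have hrow : ∀ j, ∑ k ∈ J, K (j - k) ≤ ∑' i, K i := fun j => by
    rw [← (Equiv.subLeft j).tsum_eq K]
    exact (((Equiv.subLeft j).summable_iff).2 hK).sum_le_tsum J fun k _ => hK0 _
  have hcol : ∀ k, ∑ j ∈ J, K (j - k) ≤ ∑' i, K i := fun k => by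
    rw [← (Equiv.subRight k).tsum_eq K]
    exact (((Equiv.subRight k).summable_iff).2 hK).sum_le_tsum J fun k _ => hK0 _
  have hΦ2 : ‖Φ‖ ^ 2 ≤ (∑' i, K i) * A := by
    have e : ((‖Φ‖ ^ 2 : ℝ) : ℂ) = ∑ j ∈ J, ∑ k ∈ J,
        ((N j : ℂ) * N k) * inner ℂ (v j) (T (j - k) (v k)) := by
      rw [Complex.ofReal_pow, ← RCLike.ofReal_eq_complex_ofReal, ← inner_self_eq_norm_sq_to_K, hΦ,
        sum_inner]
      refine Finset.sum_congr rfl fun j _ => ?_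
      rw [inner_sum]
      refine Finset.sum_congr rfl fun k _ => ?_
      rw [inner_smul_left, inner_smul_right, hadj, sub_eq_add_neg, hadd, Complex.conj_ofReal,
        mul_assoc]
      rfl
    have h1 : ‖Φ‖ ^ 2 ≤ ∑ j ∈ J, ∑ k ∈ J, N j * N k * K (j - k) := by
      have h2 : ‖((‖Φ‖ ^ 2 : ℝ) : ℂ)‖ = ‖Φ‖ ^ 2 := by
        rw [Complex.norm_real, Real.norm_of_nonneg (by positivity)]
      rw [← h2, e]
      refine (norm_sum_le _ _).trans (Finset.sum_le_sum fun j _ => ?_)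
      refine (norm_sum_le _ _).trans (Finset.sum_le_sum fun k _ => ?_)
      rw [norm_mul, norm_mul, Complex.norm_real, Complex.norm_real, Real.norm_of_nonneg (hN0 j),
        Real.norm_of_nonneg (hN0 k)]
      exact mul_le_mul_of_nonneg_left (hv j k) (mul_nonneg (hN0 j) (hN0 k))
    have h2 : ∑ j ∈ J, ∑ k ∈ J, N j * N k * K (j - k) ≤
        ∑ j ∈ J, ∑ k ∈ J, (N j ^ 2 / 2 * K (j - k) + N k ^ 2 / 2 * K (j - k)) := by
      refine Finset.sum_le_sum fun j _ => Finset.sum_le_sum fun k _ => ?_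
      rw [← add_mul]
      refine mul_le_mul_of_nonneg_right ?_ (hK0 _)
      nlinarith [sq_nonneg (N j - N k)]
    refine h1.trans (h2.trans ?_)
    simp only [Finset.sum_add_distrib]
    rw [Finset.sum_comm (f := fun j k => N k ^ 2 / 2 * K (j - k))]
    simp only [← Finset.mul_sum]
    have h3 : ∑ j ∈ J, N j ^ 2 / 2 * ∑ k ∈ J, K (j - k) ≤ A / 2 * ∑' i, K i := by
      rw [hA, Finset.sum_div, Finset.sum_mul]
      exact Finset.sum_le_sum fun j _ => mul_le_mul_of_nonneg_left (hrow j) (by positivity)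
    have h4 : ∑ k ∈ J, N k ^ 2 / 2 * ∑ j ∈ J, K (j - k) ≤ A / 2 * ∑' i, K i := by
      rw [hA, Finset.sum_div, Finset.sum_mul]
      exact Finset.sum_le_sum fun j _ => mul_le_mul_of_nonneg_left (hcol j) (by positivity)
    linarith
  rcases eq_or_lt_of_le hA0 with h | h
  · rw [← h]
    have : 0 ≤ ∑' j, K j := tsum_nonneg hK0
    positivity
  · refine le_of_mul_le_mul_left ?_ h
    calc A * A ≤ (‖Φ‖ * ‖f‖) * (‖Φ‖ * ‖f‖) := mul_self_le_mul_self hA0 hAle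
      _ = ‖Φ‖ ^ 2 * ‖f‖ ^ 2 := by ring
      _ ≤ ((∑' i, K i) * A) * ‖f‖ ^ 2 := by gcongr
      _ = A * ((∑' j, K j) * ‖f‖ ^ 2) := by ring

/-- Existence of norming functionals on finitely many coordinates. -/
theorem exists_dual_sum_rpow {ι : Type*} (S : Finset ι) (F : ι → ℂ) {q r : ℝ} (hq : 1 < q)
    (hr : r * (q - 1) = q) :
    ∃ g : ι → ℂ, ∑ x ∈ S, ‖g x‖ ^ r ≤ 1 ∧
      ∑ x ∈ S, F x * (starRingEnd ℂ) (g x) = (((∑ x ∈ S, ‖F x‖ ^ q) ^ (1 / q) : ℝ) : ℂ) := by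
  have hr0 : 0 < r := by
    have : 0 < q - 1 := by linarith
    by_contra h
    have := mul_nonpos_of_nonpos_of_nonneg (not_lt.1 h) this.le
    linarith
  set M : ℝ := ∑ x ∈ S, ‖F x‖ ^ q with hM
  have hM0 : 0 ≤ M := Finset.sum_nonneg fun x _ => by positivity
  rcases eq_or_lt_of_le hM0 with h | h
  · refine ⟨0, ?_, ?_⟩
    · simp [Real.zero_rpow hr0.ne']
    · rw [← h, Real.zero_rpow (by positivity)]
      simp
  · refine ⟨fun x => ((‖F x‖ ^ (q - 2) * M ^ (1 / q - 1) : ℝ) : ℂ) * F x, ?_, ?_⟩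
    · have e : ∀ x ∈ S, ‖((‖F x‖ ^ (q - 2) * M ^ (1 / q - 1) : ℝ) : ℂ) * F x‖ ^ r =
          ‖F x‖ ^ q * M⁻¹ := by
        intro x _
        rcases eq_or_ne (F x) 0 with h0 | h0
        · simp [h0, Real.zero_rpow hr0.ne', Real.zero_rpow (by linarith : q ≠ 0)]
        have h0' : 0 < ‖F x‖ := norm_pos_iff.2 h0
        rw [norm_mul, Complex.norm_real, Real.norm_of_nonneg (by positivity), mul_right_comm]
        have h1 : ‖F x‖ ^ (q - 2) * ‖F x‖ = ‖F x‖ ^ (q - 1) := by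
          conv_lhs => rw [← Real.rpow_one ‖F x‖, Real.rpow_one, ← Real.rpow_add_one h0'.ne']
          congr 1; ring
        rw [h1, Real.mul_rpow (by positivity) (by positivity), ← Real.rpow_mul h0'.le,
          ← Real.rpow_mul h.le, mul_comm (q - 1), hr]
        have h2 : (1 / q - 1) * r = -1 := by
          field_simp
          linarith
        rw [h2, Real.rpow_neg_one]
      rw [Finset.sum_congr rfl e, ← Finset.sum_mul, ← hM, mul_inv_cancel₀ h.ne']
    · have e : ∀ x ∈ S, F x * (starRingEnd ℂ) (((‖F x‖ ^ (q - 2) * M ^ (1 / q - 1) : ℝ) : ℂ) * F x) =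
          ((‖F x‖ ^ q * M ^ (1 / q - 1) : ℝ) : ℂ) := by
        intro x _
        rw [map_mul, Complex.conj_ofReal, mul_left_comm, Complex.mul_conj, Complex.normSq_eq_norm_sq,
          ← Complex.ofReal_mul, mul_right_comm]
        congr 2
        rcases eq_or_ne (F x) 0 with h0 | h0
        · simp [h0, Real.zero_rpow (by linarith : q ≠ 0)]
        have h0' : 0 < ‖F x‖ := norm_pos_iff.2 h0
        rw [← Real.rpow_natCast, ← Real.rpow_add h0']
        congr 1; push_cast; ring
      rw [Finset.sum_congr rfl e, ← Complex.ofReal_sum, ← Finset.sum_mul, ← hM]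
      congr 1
      rw [← Real.rpow_one_add' h.le (by simp; linarith)]
      congr 1; ring

/-- The multiplier `exp (i t (1 - γ x) ^ a)`, as a function of a complex variable. -/
noncomputable def fractionalMultiplier (γ a t : ℝ) (z : ℂ) : ℂ :=
  Complex.exp (Complex.I * t * ((1 - γ * z.re) ^ a : ℝ))

theorem norm_fractionalMultiplier (γ a t : ℝ) (z : ℂ) : ‖fractionalMultiplier γ a t z‖ = 1 := by
  rw [fractionalMultiplier, mul_assoc, ← Complex.ofReal_mul, mul_comm,
    Complex.norm_exp_ofReal_mul_I]

theorem continuous_fractionalMultiplier (γ : ℝ) {a : ℝ} (ha : 0 ≤ a) (t : ℝ) :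
    Continuous (fractionalMultiplier γ a t) := by
  have : Continuous fun z : ℂ => (1 - γ * z.re) ^ a :=
    Continuous.rpow_const (by fun_prop) fun z => Or.inr ha
  unfold fractionalMultiplier
  fun_prop

theorem exists_norm_chebyshevUCoeff_fractionalMultiplier_le {γ a : ℝ} (hγ0 : 0 < γ) (hγ1 : γ < 1)
    (ha : 0 < a) : ∃ κ : ℤ → ℝ, (∀ j, 0 ≤ κ j) ∧ Summable κ ∧ ∀ (j : ℤ) (n : ℕ),
      ‖chebyshevUCoeff (fun x : ℝ => fractionalMultiplier γ a j x) n‖ ≤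
        κ j * ((n : ℝ) + 1) ^ 2 := by
  obtain ⟨C, hC0, hC⟩ := exists_norm_chebyshevUCoeff_exp_le hγ0 hγ1 ha
  refine ⟨fun j => C * |(j : ℝ)| ^ (-(4 / 3) : ℝ) + if j = 0 then 2 else 0, fun j => ?_, ?_,
    fun j n => ?_⟩
  · dsimp only; split_ifs <;> positivity
  · refine Summable.add ((Real.summable_abs_int_rpow (by norm_num)).mul_left C) ?_
    exact (hasSum_ite_eq (0 : ℤ) (2 : ℝ)).summable
  · rcases eq_or_ne j 0 with rfl | hj
    · have h1 := norm_chebyshevUCoeff_le (F := fun x : ℝ => fractionalMultiplier γ a (0 : ℤ) x)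
        (c := 1) (fun x _ => (norm_fractionalMultiplier _ _ _ _).le) n
      have h2 : (1 : ℝ) ≤ ((n : ℝ) + 1) ^ 2 := one_le_pow₀ (by simp)
      simp only [if_true, Int.cast_zero, abs_zero]
      rw [Real.zero_rpow (by norm_num)]
      simp only [Int.cast_zero] at h1
      linarith
    · have hj1 : (1 : ℝ) ≤ |(j : ℝ)| := by exact_mod_cast Int.one_le_abs hj
      have hj0 : (0 : ℝ) < |(j : ℝ)| := by linarith
      have h := hC j (|(j : ℝ)| ^ (-(1 / 3) : ℝ)) (by positivity)
        (Real.rpow_le_one_of_one_le_of_nonpos hj1 (by norm_num)) (by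
          rw [← Real.rpow_natCast, ← Real.rpow_mul hj0.le]
          norm_num
          rw [Real.rpow_neg_one, mul_inv_cancel₀ hj0.ne']) n
      have e : (|(j : ℝ)| ^ (-(1 / 3) : ℝ)) ^ 4 = |(j : ℝ)| ^ (-(4 / 3) : ℝ) := by
        rw [← Real.rpow_natCast, ← Real.rpow_mul hj0.le]
        norm_num
      rw [e] at h
      simp only [hj, if_false, add_zero]
      exact h.trans (le_of_eq (by ring))

theorem summable_add_one_pow_mul_geometric {ρ : ℝ} (h0 : 0 < ρ) (h1 : ρ < 1) (k : ℕ) :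
    Summable fun n : ℕ => ((n : ℝ) + 1) ^ k * ρ ^ n := by
  have := summable_pow_mul_geometric_of_norm_lt_one k (r := ρ)
    (by rwa [Real.norm_of_nonneg h0.le])
  have := ((summable_nat_add_iff 1).2 this).mul_right ρ⁻¹
  refine this.congr fun n => ?_
  push_cast
  rw [pow_succ, mul_assoc, mul_assoc, mul_inv_cancel₀ h0.ne', mul_one]

/-- The dispersive estimate on a homogeneous tree, at integer times. -/
theorem exists_norm_inner_fractionalMultiplier_le {V : Type*} [DecidableEq V] {G : SimpleGraph V}
    [∀ v, Fintype (G.neighborSet v)] (hG : G.IsTree) {Q : ℕ} (hQ : 2 ≤ Q)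
    (hdeg : ∀ v : V, G.degree v = Q + 1)
    (X : lp (fun _ : V => ℂ) 2 →L[ℂ] lp (fun _ : V => ℂ) 2)
    (hX : ∀ (f : lp (fun _ : V => ℂ) 2) (x : V),
      X f x = (2 * (√(Q : ℝ) : ℂ))⁻¹ * ∑ y ∈ G.neighborFinset x, f y)
    (hsa : IsSelfAdjoint X) {γ a : ℝ} (hγ0 : 0 < γ) (hγ1 : γ < 1) (ha : 0 < a) {r θ : ℝ}
    (hθ0 : 0 ≤ θ) (hθ1 : θ < 1) (hr : r * (1 - θ / 2) = 1) :
    ∃ K : ℤ → ℝ, (∀ j, 0 ≤ K j) ∧ Summable K ∧ ∀ (S : Finset V) (g h : V → ℂ),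
      ∑ x ∈ S, ‖g x‖ ^ r ≤ 1 → ∑ x ∈ S, ‖h x‖ ^ r ≤ 1 → ∀ j : ℤ,
        ‖inner ℂ (∑ x ∈ S, lp.single 2 x (g x))
          (cfc (fractionalMultiplier γ a j) X (∑ x ∈ S, lp.single 2 x (h x)))‖ ≤ K j := by
  obtain ⟨o⟩ := hG.connected.nonempty
  have : Nontrivial (lp (fun _ : V => ℂ) 2) := by
    refine ⟨lp.single 2 o 1, 0, fun h => ?_⟩
    have := congrArg (fun f : lp (fun _ : V => ℂ) 2 => f o) h
    simp at this
  have hX1 := norm_adjacency_le_one hG hQ hdeg X hX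
  obtain ⟨κ, hκ0, hκs, hκ⟩ := exists_norm_chebyshevUCoeff_fractionalMultiplier_le hγ0 hγ1 ha
  set s : ℝ := (√(Q : ℝ))⁻¹ with hs
  have hQ2 : (2 : ℝ) ≤ Q := by exact_mod_cast hQ
  have hs0 : 0 < s := by positivity
  have hs1 : s < 1 := inv_lt_one_of_one_lt₀ (by rw [Real.lt_sqrt] <;> linarith)
  set ρ : ℝ := s ^ (1 - θ) with hρ
  have hρ0 : 0 < ρ := by positivity
  have hρ1 : ρ < 1 := Real.rpow_lt_one hs0.le hs1 (by linarith)
  set u : ℕ → ℝ := fun n => ((n : ℝ) + 1) ^ 1 * ρ ^ n with hu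
  have hus : Summable u := summable_add_one_pow_mul_geometric hρ0 hρ1 1
  have hus3 : Summable fun n : ℕ => ((n : ℝ) + 1) ^ 2 * u n := by
    refine (summable_add_one_pow_mul_geometric hρ0 hρ1 3).congr fun n => ?_
    simp only [hu]
    ring
  have hsum0 : 0 ≤ ∑' n : ℕ, ((n : ℝ) + 1) ^ 2 * u n := tsum_nonneg fun n => by
    simp only [hu]; positivity
  refine ⟨fun j => κ j * ∑' n : ℕ, ((n : ℝ) + 1) ^ 2 * u n, fun j => mul_nonneg (hκ0 j) hsum0,
    hκs.mul_right _, fun S g h hg hh j => ?_⟩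
  have := norm_inner_cfc_le_tsum hsa hX1 (g := ∑ x ∈ S, lp.single 2 x (g x))
    (h := ∑ x ∈ S, lp.single 2 x (h x)) (u := u) (B := fun n => κ j * ((n : ℝ) + 1) ^ 2)
    (f := fractionalMultiplier γ a j) (fun n => ?_) hus
    ((continuous_fractionalMultiplier γ ha.le j).comp Complex.continuous_ofReal).continuousOn
    (hκ j) ?_
  · refine this.trans ?_
    simp only [mul_assoc, tsum_mul_left, le_refl]
  · refine (norm_inner_chebyshevU_adjacency_le hG hQ hdeg X hX n
      (norm_aeval_chebyshevU_le hsa hX1 n) hθ0 hθ1.le hr S hg hh).trans ?_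
    rw [mul_comm, ← Real.rpow_natCast s n, ← Real.rpow_mul hs0.le, mul_comm (n : ℝ),
      Real.rpow_mul hs0.le, Real.rpow_natCast]
    simp only [hu]
    refine mul_le_mul_of_nonneg_right ?_ (by positivity)
    rw [pow_one]
    calc ((n : ℝ) + 1) ^ θ ≤ ((n : ℝ) + 1) ^ (1 : ℝ) :=
          Real.rpow_le_rpow_of_exponent_le (by simp) hθ1.le
      _ = _ := Real.rpow_one _
  · simp only [mul_assoc]
    exact hus3.mul_left _

theorem norm_cfc_fractionalMultiplier_le {E : Type*} [NormedAddCommGroup E]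
    [InnerProductSpace ℂ E] [CompleteSpace E] (X : E →L[ℂ] E) (γ a t : ℝ) :
    ‖cfc (fractionalMultiplier γ a t) X‖ ≤ 1 :=
  norm_cfc_le zero_le_one fun z _ => (norm_fractionalMultiplier γ a t z).le

theorem cfc_fractionalMultiplier_add {E : Type*} [NormedAddCommGroup E]
    [InnerProductSpace ℂ E] [CompleteSpace E] (X : E →L[ℂ] E) (γ : ℝ) {a : ℝ} (ha : 0 ≤ a)
    (s t : ℝ) : cfc (fractionalMultiplier γ a (s + t)) X =
      cfc (fractionalMultiplier γ a s) X * cfc (fractionalMultiplier γ a t) X := by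
  rw [← cfc_mul _ _ X (continuous_fractionalMultiplier γ ha s).continuousOn
    (continuous_fractionalMultiplier γ ha t).continuousOn]
  congr 1
  ext z
  rw [fractionalMultiplier, fractionalMultiplier, fractionalMultiplier, ← Complex.exp_add]
  congr 1
  push_cast
  ring

theorem star_cfc_fractionalMultiplier {E : Type*} [NormedAddCommGroup E]
    [InnerProductSpace ℂ E] [CompleteSpace E] (X : E →L[ℂ] E) (γ a t : ℝ) :
    star (cfc (fractionalMultiplier γ a t) X) = cfc (fractionalMultiplier γ a (-t)) X := by
  rw [← cfc_star]
  congr 1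
  ext z
  rw [fractionalMultiplier, fractionalMultiplier, RCLike.star_def, ← Complex.exp_conj]
  congr 1
  rw [map_mul, map_mul, Complex.conj_I, Complex.conj_ofReal, Complex.conj_ofReal]
  push_cast
  ring

/-- Strichartz estimate along arithmetic progressions of times. -/
theorem exists_tsum_eLpNorm_sq_le {V : Type*} [MeasurableSpace V] [DiscreteMeasurableSpace V]
    {G : SimpleGraph V} [∀ v, Fintype (G.neighborSet v)] (hG : G.IsTree) {Q : ℕ} (hQ : 2 ≤ Q)
    (hdeg : ∀ v : V, G.degree v = Q + 1)
    (X : lp (fun _ : V => ℂ) 2 →L[ℂ] lp (fun _ : V => ℂ) 2)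
    (hX : ∀ (f : lp (fun _ : V => ℂ) 2) (x : V),
      X f x = (2 * (√(Q : ℝ) : ℂ))⁻¹ * ∑ y ∈ G.neighborFinset x, f y)
    (hsa : IsSelfAdjoint X) {γ a : ℝ} (hγ0 : 0 < γ) (hγ1 : γ < 1) (ha : 0 < a) {q : ℝ≥0∞}
    (hq2 : 2 < q) (hqt : q ≠ ⊤) :
    ∃ κ : ℝ, 0 ≤ κ ∧ ∀ (f : lp (fun _ : V => ℂ) 2) (s : ℝ),
      ∑' j : ℤ, eLpNorm (fun x => cfc (fractionalMultiplier γ a (s + j)) X f x) q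
        Measure.count ^ (2 : ℝ) ≤ ENNReal.ofReal (κ * ‖f‖ ^ 2) := by
  classical
  set b : ℝ := q.toReal with hb
  have hb2 : 2 < b := by
    have := (ENNReal.toReal_lt_toReal (by norm_num) hqt).2 hq2
    simpa using this
  have hb0 : 0 < b := by linarith
  set r : ℝ := b / (b - 1) with hr
  have hb1 : b - 1 ≠ 0 := by linarith
  obtain ⟨K, hK0, hKs, hK⟩ := exists_norm_inner_fractionalMultiplier_le hG hQ hdeg X hX hsa hγ0 hγ1
    ha (r := r) (θ := 2 / b) (by positivity) (by rw [div_lt_one hb0]; exact hb2)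
    (by rw [hr]; field_simp)
  refine ⟨∑' j, K j, tsum_nonneg hK0, fun f s => ?_⟩
  have hfin : ∀ (J : Finset ℤ) (S : Finset V), ∑ j ∈ J,
      (∑ x ∈ S, ‖cfc (fractionalMultiplier γ a (s + j)) X f x‖ₑ ^ b) ^ (2 / b) ≤
        ENNReal.ofReal ((∑' j, K j) * ‖f‖ ^ 2) := by
    intro J S
    have hsplit : ∀ j : ℤ, cfc (fractionalMultiplier γ a (s + j)) X f =
        cfc (fractionalMultiplier γ a j) X (cfc (fractionalMultiplier γ a s) X f) := fun j => by
      rw [add_comm, cfc_fractionalMultiplier_add X γ ha.le]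
      rfl
    have hdual := fun j : ℤ => exists_dual_sum_rpow S
      (fun x => cfc (fractionalMultiplier γ a (s + j)) X f x) (q := b) (r := r) (by linarith)
      (by rw [hr]; field_simp)
    choose g hg1 hg2 using hdual
    have h := sum_sq_le_of_norm_inner_le (T := fun j : ℤ => cfc (fractionalMultiplier γ a j) X)
      (fun j => by rw [star_cfc_fractionalMultiplier]; push_cast; rfl)
      (fun j k => by push_cast; exact cfc_fractionalMultiplier_add X γ ha.le j k)
      hK0 hKs J (v := fun j => ∑ x ∈ S, lp.single 2 x (g j x))
      (fun j k => hK S (g j) (g k) (hg1 j) (hg1 k) (j - k))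
      (N := fun j : ℤ => (∑ x ∈ S, ‖cfc (fractionalMultiplier γ a (s + j)) X f x‖ ^ b) ^ (1 / b))
      (fun j => by positivity) (f := cfc (fractionalMultiplier γ a s) X f) (fun j => by
        rw [← hsplit, ← hg2, sum_inner]
        refine Finset.sum_congr rfl fun x _ => ?_
        rw [lp.inner_single_left, RCLike.inner_apply])
    have hf : ‖cfc (fractionalMultiplier γ a s) X f‖ ≤ ‖f‖ := by
      refine (ContinuousLinearMap.le_of_opNorm_le _
        (norm_cfc_fractionalMultiplier_le X γ a s) f).trans ?_
      rw [one_mul]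
    have hKpos : 0 ≤ ∑' j, K j := tsum_nonneg hK0
    have e : ∑ j ∈ J,
      (∑ x ∈ S, ‖cfc (fractionalMultiplier γ a (s + j)) X f x‖ₑ ^ b) ^ (2 / b) =
        ENNReal.ofReal (∑ j ∈ J, ((∑ x ∈ S,
          ‖cfc (fractionalMultiplier γ a (s + j)) X f x‖ ^ b) ^ (1 / b)) ^ 2) := by
      rw [ENNReal.ofReal_sum_of_nonneg fun j _ => by positivity]
      refine Finset.sum_congr rfl fun j _ => ?_
      rw [← Real.rpow_natCast, ← Real.rpow_mul (by positivity),
        ← ENNReal.ofReal_rpow_of_nonneg (by positivity) (by positivity),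
        ENNReal.ofReal_sum_of_nonneg fun x _ => by positivity]
      congr 1
      · refine Finset.sum_congr rfl fun x _ => ?_
        rw [← ENNReal.ofReal_rpow_of_nonneg (norm_nonneg _) hb0.le, ofReal_norm]
      · push_cast
        ring
    rw [e]
    exact ENNReal.ofReal_le_ofReal (h.trans (by gcongr))
  rw [ENNReal.tsum_eq_iSup_sum]
  refine iSup_le fun J => ?_
  have hlim : Filter.Tendsto (fun S : Finset V => ∑ j ∈ J,
      (∑ x ∈ S, ‖cfc (fractionalMultiplier γ a (s + j)) X f x‖ₑ ^ b) ^ (2 / b)) Filter.atTop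
      (nhds (∑ j ∈ J, eLpNorm (fun x => cfc (fractionalMultiplier γ a (s + j)) X f x) q
        Measure.count ^ (2 : ℝ))) := by
    refine tendsto_finsetSum _ fun j _ => ?_
    rw [eLpNorm_eq_lintegral_rpow_enorm_toReal (by positivity) hqt, lintegral_count,
      ← ENNReal.rpow_mul, one_div_mul_eq_div]
    exact (ENNReal.continuous_rpow_const.tendsto _).comp ENNReal.summable.hasSum
  exact le_of_tendsto' hlim fun S => hfin J S

/-- Superadditivity of the lower Lebesgue integral for countable families. -/
theorem tsum_lintegral_le_lintegral_tsum {ι β : Type*} [MeasurableSpace β] (μ : Measure β)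
    (F : ι → β → ℝ≥0∞) : ∑' i, ∫⁻ x, F i x ∂μ ≤ ∫⁻ x, ∑' i, F i x ∂μ := by
  classical
  rw [ENNReal.tsum_eq_iSup_sum]
  refine iSup_le fun J => ?_
  have h : ∑ i ∈ J, ∫⁻ x, F i x ∂μ ≤ ∫⁻ x, ∑ i ∈ J, F i x ∂μ := by
    induction J using Finset.induction_on with
    | empty => simp
    | insert i J hi ih =>
      simp only [Finset.sum_insert hi]
      exact (add_le_add_right ih _).trans (le_lintegral_add _ _)
  exact h.trans (lintegral_mono fun x => ENNReal.sum_le_tsum J)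

theorem lintegral_le_lintegral_tsum_translates (F : ℝ → ℝ≥0∞) :
    ∫⁻ t, F t ≤ ∫⁻ s in Set.Ioc (0 : ℝ) 1, ∑' j : ℤ, F (s + j) := by
  have h1 : ∫⁻ t, F t = ∑' j : ℤ, ∫⁻ t in Set.Ioc (j : ℝ) (j + 1), F t := by
    rw [← lintegral_iUnion (fun j => measurableSet_Ioc) (Set.pairwise_disjoint_Ioc_intCast ℝ),
      iUnion_Ioc_intCast, setLIntegral_univ]
  have h2 : ∀ j : ℤ, ∫⁻ t in Set.Ioc (j : ℝ) (j + 1), F t =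
      ∫⁻ s in Set.Ioc (0 : ℝ) 1, F (s + j) := by
    intro j
    rw [← (measurePreserving_add_right volume (j : ℝ)).setLIntegral_comp_preimage_emb
      (measurableEmbedding_addRight (j : ℝ)) F]
    congr 2
    ext t
    simp
  rw [h1]
  simp only [h2]
  exact tsum_lintegral_le_lintegral_tsum _ _

/-- Square summability along all unit arithmetic progressions implies `L^p` integrability for all
`p ≥ 2`. -/
theorem eLpNorm_toReal_le_of_tsum_sq_le {g : ℝ → ℝ≥0∞} {A p : ℝ≥0∞} (hp : 2 ≤ p)
    (hg : ∀ s, ∑' j : ℤ, g (s + j) ^ (2 : ℝ) ≤ A ^ (2 : ℝ)) :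
    eLpNorm (fun t => (g t).toReal) p volume ≤ A := by
  have hgA : ∀ t, g t ≤ A := by
    intro t
    have h := (ENNReal.le_tsum (f := fun j : ℤ => g (t + j) ^ (2 : ℝ)) 0).trans (hg t)
    simp only [Int.cast_zero, add_zero] at h
    exact (ENNReal.rpow_le_rpow_iff two_pos).1 h
  have henorm : ∀ t, ‖(g t).toReal‖ₑ ≤ g t := fun t => by
    rw [Real.enorm_eq_ofReal ENNReal.toReal_nonneg]
    exact ENNReal.ofReal_toReal_le
  rcases eq_or_ne p ⊤ with rfl | hpt
  · rw [eLpNorm_exponent_top]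
    exact eLpNormEssSup_le_of_ae_enorm_bound
      (Filter.Eventually.of_forall fun t => (henorm t).trans (hgA t))
  have hp0 : p ≠ 0 := (lt_of_lt_of_le two_pos hp).ne'
  set b := p.toReal with hb
  have hb2 : 2 ≤ b := by
    have := (ENNReal.toReal_le_toReal (by norm_num) hpt).2 hp
    simpa using this
  have hb0 : 0 < b := by linarith
  have hpow : ∀ s, ∑' j : ℤ, g (s + j) ^ b ≤ A ^ b := by
    intro s
    have h1 : ∀ x : ℝ≥0∞, x ^ b = x ^ (2 : ℝ) * x ^ (b - 2) := fun x => by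
      rw [← ENNReal.rpow_add_of_nonneg _ _ two_pos.le (by linarith)]
      congr 1
      ring
    calc ∑' j : ℤ, g (s + j) ^ b ≤ ∑' j : ℤ, g (s + j) ^ (2 : ℝ) * A ^ (b - 2) := by
          refine ENNReal.tsum_le_tsum fun j => ?_
          rw [h1]
          refine mul_le_mul_right (ENNReal.rpow_le_rpow ?_ (by linarith)) _
          exact hgA _
      _ = (∑' j : ℤ, g (s + j) ^ (2 : ℝ)) * A ^ (b - 2) := ENNReal.tsum_mul_right
      _ ≤ A ^ (2 : ℝ) * A ^ (b - 2) := by gcongr; exact hg s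
      _ = A ^ b := (h1 A).symm
  rw [eLpNorm_eq_lintegral_rpow_enorm_toReal hp0 hpt, one_div, ENNReal.rpow_inv_le_iff hb0]
  calc ∫⁻ t, ‖(g t).toReal‖ₑ ^ b ≤ ∫⁻ t, g t ^ b :=
        lintegral_mono fun t => ENNReal.rpow_le_rpow (henorm t) hb0.le
    _ ≤ ∫⁻ s in Set.Ioc (0 : ℝ) 1, ∑' j : ℤ, g (s + j) ^ b :=
        lintegral_le_lintegral_tsum_translates _
    _ ≤ ∫⁻ s in Set.Ioc (0 : ℝ) 1, A ^ b := lintegral_mono fun s => hpow s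
    _ = A ^ b := by simp

theorem eLpNorm_top_count_le {V : Type*} [MeasurableSpace V] [DiscreteMeasurableSpace V]
    (F : V → ℂ) {q : ℝ≥0∞} (hq0 : q ≠ 0) (hqt : q ≠ ⊤) :
    eLpNorm F ⊤ Measure.count ≤ eLpNorm F q Measure.count := by
  rw [eLpNorm_exponent_top]
  refine eLpNormEssSup_le_of_ae_enorm_bound (Filter.Eventually.of_forall fun x => ?_)
  rw [eLpNorm_eq_lintegral_rpow_enorm_toReal hq0 hqt, lintegral_count, one_div,
    ENNReal.le_rpow_inv_iff (ENNReal.toReal_pos hq0 hqt)]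
  exact ENNReal.le_tsum (f := fun x => ‖F x‖ₑ ^ q.toReal) x

theorem lp.eLpNorm_two_count {V : Type*} [MeasurableSpace V] [DiscreteMeasurableSpace V]
    (F : lp (fun _ : V => ℂ) 2) :
    eLpNorm (fun x => F x) 2 Measure.count = ENNReal.ofReal ‖F‖ := by
  have h := lp.hasSum_norm (p := 2) (by norm_num) F
  have key : ∑' x, ‖F x‖ₑ ^ (2 : ℝ≥0∞).toReal = ENNReal.ofReal ‖F‖ ^ (2 : ℝ≥0∞).toReal := by
    rw [ENNReal.ofReal_rpow_of_nonneg (norm_nonneg _) (by norm_num), ← h.tsum_eq,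
      ENNReal.ofReal_tsum_of_nonneg (fun x => by positivity) h.summable]
    refine tsum_congr fun x => ?_
    rw [← ENNReal.ofReal_rpow_of_nonneg (norm_nonneg _) (by norm_num), ofReal_norm]
  rw [eLpNorm_eq_lintegral_rpow_enorm_toReal two_ne_zero ENNReal.ofNat_ne_top, lintegral_count,
    one_div, key, ENNReal.rpow_rpow_inv (by norm_num)]

theorem cfc_exp_cpow_aeval_eq {E : Type*} [NormedAddCommGroup E] [InnerProductSpace ℂ E]
    [CompleteSpace E] [Nontrivial E] {X : E →L[ℂ] E} (hsa : IsSelfAdjoint X) (hX : ‖X‖ ≤ 1)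
    {γ : ℝ} (hγ0 : 0 < γ) (hγ1 : γ < 1) (α t : ℝ) :
    cfc (fun z : ℂ => Complex.exp (Complex.I * t * z ^ (α / 2 : ℂ)))
        (Polynomial.aeval X (1 - Polynomial.C (γ : ℂ) * Polynomial.X)) =
      cfc (fractionalMultiplier γ (α / 2) t) X := by
  have hpos : ∀ x ∈ Set.Icc (-1 : ℝ) 1, 0 < 1 - γ * x := fun x hx => by nlinarith [hx.2]
  have heval : ∀ x : ℝ, (1 - Polynomial.C (γ : ℂ) * Polynomial.X).eval (x : ℂ) =
      ((1 - γ * x : ℝ) : ℂ) := fun x => by simp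
  have hcont : ContinuousOn (fun z : ℂ => Complex.exp (Complex.I * t * z ^ (α / 2 : ℂ)))
      ((1 - Polynomial.C (γ : ℂ) * Polynomial.X).eval '' spectrum ℂ X) := by
    rintro _ ⟨z, hz, rfl⟩
    obtain ⟨x, hx, rfl⟩ := exists_ofReal_of_mem_spectrum hsa hX hz
    refine ContinuousAt.continuousWithinAt ?_
    have hslit : (1 - Polynomial.C (γ : ℂ) * Polynomial.X).eval (x : ℂ) ∈ Complex.slitPlane := by
      rw [heval]
      exact Complex.ofReal_mem_slitPlane.2 (hpos x hx)
    exact (continuousAt_const.mul (continuousAt_id.cpow continuousAt_const hslit)).cexp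
  rw [← cfc_comp_polynomial (1 - Polynomial.C (γ : ℂ) * Polynomial.X) _ X hcont hsa.isStarNormal]
  refine cfc_congr fun z hz => ?_
  obtain ⟨x, hx, rfl⟩ := exists_ofReal_of_mem_spectrum hsa hX hz
  have e : ((α : ℂ) / 2) = ((α / 2 : ℝ) : ℂ) := by push_cast; rfl
  simp only [fractionalMultiplier, heval]
  rw [e, ← Complex.ofReal_cpow (hpos x hx).le, Complex.ofReal_re]

theorem stmt19_strichartz_tree {V : Type*} [MeasurableSpace V] [DiscreteMeasurableSpace V]
    (Q : ℕ) (hQ : 2 ≤ Q)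
    -- T is a homogeneous tree of degree Q+1, with vertex set V
    (G : SimpleGraph V) [∀ v, Fintype (G.neighborSet v)]
    (htree : G.IsTree) (hdeg : ∀ v : V, G.degree v = Q + 1)
    -- the combinatorial Laplacian, a bounded self-adjoint operator on ℓ²(T)
    (Δ : lp (fun _ : V => ℂ) 2 →L[ℂ] lp (fun _ : V => ℂ) 2)
    (hΔ : ∀ (f : lp (fun _ : V => ℂ) 2) (x : V),
      Δ f x = ((Q : ℂ) + 1)⁻¹ * (∑ y ∈ G.neighborFinset x, f y) - f x)
    (hsa : IsSelfAdjoint Δ)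
    (α : ℝ) (hα0 : 0 < α) (hα2 : α ≤ 2)
    -- (p, q) is an admissible pair: (1/p, 1/q) ∈ [0,1/2] × [0,1/2) ∪ {(0,1/2)}
    (p q : ℝ≥0∞)
    (hadm : (1 / p ≤ 1 / 2 ∧ 1 / q < 1 / 2) ∨ (1 / p = 0 ∧ 1 / q = 1 / 2)) :
    ∃ C : ℝ, 0 < C ∧ ∀ f : lp (fun _ : V => ℂ) 2,
      eLpNorm
          (fun t : ℝ =>
            (eLpNorm
                (fun x : V =>
                  (cfc (fun z : ℂ => Complex.exp (Complex.I * t * z ^ (α / 2 : ℂ))) (-Δ)) f x)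
                q Measure.count).toReal)
          p volume
        ≤ ENNReal.ofReal (C * ‖f‖) := by
  classical
  obtain ⟨o⟩ := htree.connected.nonempty
  have : Nontrivial (lp (fun _ : V => ℂ) 2) := by
    refine ⟨lp.single 2 o 1, 0, fun h => ?_⟩
    have := congrArg (fun f : lp (fun _ : V => ℂ) 2 => f o) h
    simp at this
  have hQ2 : (2 : ℝ) ≤ Q := by exact_mod_cast hQ
  set σ : ℝ := √(Q : ℝ) with hσ
  have hσ2 : σ ^ 2 = Q := Real.sq_sqrt (by positivity)
  have hσ0 : 0 < σ := by positivity
  have hσ1 : σ ≠ 1 := fun h => by rw [h] at hσ2; linarith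
  have hσ0' : (σ : ℂ) ≠ 0 := by exact_mod_cast hσ0.ne'
  have hQ0' : (Q : ℂ) + 1 ≠ 0 := by exact_mod_cast Nat.succ_ne_zero Q
  set γ : ℝ := 2 * σ / (Q + 1) with hγ
  have hγ0 : 0 < γ := by positivity
  have hγ1 : γ < 1 := by
    rw [hγ, div_lt_one (by positivity), ← hσ2]
    have := pow_pos (abs_pos.2 (sub_ne_zero.2 hσ1)) 2
    rw [sq_abs] at this
    linarith
  have hγ0' : (γ : ℂ) ≠ 0 := by exact_mod_cast hγ0.ne'
  set X : lp (fun _ : V => ℂ) 2 →L[ℂ] lp (fun _ : V => ℂ) 2 := (γ : ℂ)⁻¹ • (1 + Δ) with hXdef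
  have hX : ∀ (f : lp (fun _ : V => ℂ) 2) (x : V),
      X f x = (2 * (σ : ℂ))⁻¹ * ∑ y ∈ G.neighborFinset x, f y := by
    intro f x
    have e : X f x = (γ : ℂ)⁻¹ * (f x + Δ f x) := rfl
    rw [e, hΔ, hγ]
    push_cast
    field_simp
    ring
  have hXsa : IsSelfAdjoint X := by
    refine IsSelfAdjoint.smul ?_ ((IsSelfAdjoint.one _).add hsa)
    rw [isSelfAdjoint_iff, star_inv₀, RCLike.star_def, Complex.conj_ofReal]
  have hX1 : ‖X‖ ≤ 1 := norm_adjacency_le_one htree hQ hdeg X hX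
  have hneg : -Δ = Polynomial.aeval X (1 - Polynomial.C (γ : ℂ) * Polynomial.X) := by
    rw [map_sub, map_mul, map_one, Polynomial.aeval_C, Polynomial.aeval_X, ← Algebra.smul_def,
      hXdef, smul_smul, mul_inv_cancel₀ hγ0', one_smul]
    abel
  have hcfc : ∀ t : ℝ, cfc (fun z : ℂ => Complex.exp (Complex.I * t * z ^ (α / 2 : ℂ))) (-Δ) =
      cfc (fractionalMultiplier γ (α / 2) t) X := by
    intro t
    rw [hneg]
    exact cfc_exp_cpow_aeval_eq hXsa hX1 hγ0 hγ1 α t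
  simp only [hcfc]
  rcases hadm with ⟨hp, hq⟩ | ⟨hp, hq⟩
  · rw [one_div, one_div, ENNReal.inv_le_inv] at hp
    rw [one_div, one_div, ENNReal.inv_lt_inv] at hq
    obtain ⟨κ, hκ0, hκ⟩ : ∃ κ : ℝ, 0 ≤ κ ∧ ∀ (f : lp (fun _ : V => ℂ) 2) (s : ℝ),
        ∑' j : ℤ, eLpNorm (fun x => cfc (fractionalMultiplier γ (α / 2) (s + j)) X f x) q
          Measure.count ^ (2 : ℝ) ≤ ENNReal.ofReal (κ * ‖f‖ ^ 2) := by
      rcases eq_or_ne q ⊤ with rfl | hqt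
      · obtain ⟨κ, hκ0, hκ⟩ := exists_tsum_eLpNorm_sq_le htree hQ hdeg X hX hXsa hγ0 hγ1
          (half_pos hα0) (q := 4) (by norm_num) (by norm_num)
        refine ⟨κ, hκ0, fun f s => le_trans (ENNReal.tsum_le_tsum fun j => ?_) (hκ f s)⟩
        exact ENNReal.rpow_le_rpow (eLpNorm_top_count_le _ (by norm_num) (by norm_num)) two_pos.le
      · exact exists_tsum_eLpNorm_sq_le htree hQ hdeg X hX hXsa hγ0 hγ1 (half_pos hα0) hq hqt
    refine ⟨√κ + 1, by positivity, fun f => ?_⟩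
    refine eLpNorm_toReal_le_of_tsum_sq_le hp fun s => (hκ f s).trans ?_
    rw [ENNReal.ofReal_rpow_of_nonneg (by positivity) two_pos.le]
    refine ENNReal.ofReal_le_ofReal ?_
    rw [Real.rpow_two, mul_pow]
    refine mul_le_mul_of_nonneg_right ?_ (by positivity)
    nlinarith [Real.sq_sqrt hκ0, Real.sqrt_nonneg κ]
  · have hp' : p = ⊤ := by simpa using hp
    have hq' : q = 2 := by simpa using hq
    subst hp' hq'
    refine ⟨1, one_pos, fun f => ?_⟩
    rw [eLpNorm_exponent_top]
    refine eLpNormEssSup_le_of_ae_enorm_bound (Filter.Eventually.of_forall fun t => ?_)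
    rw [lp.eLpNorm_two_count, ENNReal.toReal_ofReal (norm_nonneg _),
      Real.enorm_eq_ofReal (norm_nonneg _)]
    exact ENNReal.ofReal_le_ofReal (ContinuousLinearMap.le_of_opNorm_le _
      (norm_cfc_fractionalMultiplier_le X γ (α / 2) t) f)
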